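/- arXiv:1710.09287 — 2 statements merged into one kernel-verified Lean document; each statement's English description precedes it below -/
import Mathlib

section
/- Let ω ⊂ ℝ^d be a nonempty open connected set, and let μ⁰, μ¹ be compactly supported probability measures on ℝ^d, absolutely continuous with respect to the Lebesgue measure, with supp(μ⁰) ⊂ ω and supp(μ¹) ⊂ ω. Then for every T > 0 and every ε > 0 there exists a vector field u : ℝ^d × ℝ⁺ → ℝ^d, uniformly bounded, Lipschitz in space, measurable in time, and supported in ω, such that the solution μ(t) = Φ_t^u # μ⁰ of ∂_t μ + ∇·(u μ) = 0, μ(0) = μ⁰, satisfies W₁(μ(T), μ¹) ≤ ε and supp(μ(t)) ⊂ ω for all t ∈ [0,T]. -/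
open MeasureTheory Set
open scoped ENNReal NNReal

noncomputable section

/-- The Euclidean space `ℝ^d`. -/
abbrev Euc (d : ℕ) := EuclideanSpace ℝ (Fin d)

/-- The support of a Borel measure: points all of whose open neighborhoods have
positive measure. -/
def msupport {d : ℕ} (μ : Measure (Euc d)) : Set (Euc d) :=
  {x | ∀ U : Set (Euc d), IsOpen U → x ∈ U → 0 < μ U}

/-- `Φ` is the flow of the (time-dependent) vector field `w`, in the Carathéodory
(integral) sense. -/
def IsFlow {d : ℕ} (w : Euc d → ℝ → Euc d) (Φ : ℝ → Euc d → Euc d) : Prop :=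
  ∀ x t, Φ t x = x + ∫ s in (0:ℝ)..t, w (Φ s x) s

/-- Wasserstein distance `W₁`, as an infimum over couplings. -/
def W1 {d : ℕ} (μ ν : Measure (Euc d)) : ℝ≥0∞ :=
  ⨅ (π : Measure (Euc d × Euc d)) (_ : π.map Prod.fst = μ) (_ : π.map Prod.snd = ν),
    ∫⁻ q, edist q.1 q.2 ∂π

/-- A vector field uniformly bounded, Lipschitz in space and measurable in time. -/
def IsRegularField {d : ℕ} (w : Euc d → ℝ → Euc d) : Prop :=
  (∃ C : ℝ, ∀ x t, ‖w x t‖ ≤ C) ∧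
  (∃ K : ℝ≥0, ∀ t : ℝ, LipschitzWith K fun x => w x t) ∧
  ∀ x, Measurable fun t => w x t

/-!
Cover the two supports by finitely many small open convex cells of `ω` whose frontiers are
`μ₁`-null, ordered so that each cell meets the union of the preceding ones. A cut-off linear field
contracts almost all the mass of an open convex set towards one of its points, and iterating along
a chain of convex sets gathers almost all the mass of a connected open set in a prescribed open
subset. Gather the mass of `μ₀` in a slab of the last cell: by absolute continuity a hyperplane
cuts it in any prescribed proportion, and contracting the two sides separately delivers to the new
part of the last cell the mass that `μ₁` puts there, while the rest is pushed back into the union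
of the preceding cells, where the procedure is repeated. In the end, all but a small mass `η` of
the target is matched inside the cells, and the rest costs at most `η` times the diameter of the
union.
-/

/-! ### Integral curves and time-one maps -/

section TimeOneMap

variable {E : Type*} [NormedAddCommGroup E] [NormedSpace ℝ E] {v : E → E} {K : ℝ≥0} {C : ℝ}

theorem exists_isIntegralCurveOn_of_lipschitz_of_bounded [CompleteSpace E]
    (hv : LipschitzWith K v) (hC : ∀ x, ‖v x‖ ≤ C) (x : E) :
    ∃ γ : ℝ → E, γ 0 = x ∧ IsIntegralCurveOn γ (fun _ => v) (Icc 0 1) := by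
  have hC₀ : 0 ≤ C := (norm_nonneg _).trans (hC x)
  have hpicard : IsPicardLindelof (fun _ => v) (⟨0, by simp⟩ : Icc (0 : ℝ) 1) x ⟨C, hC₀⟩ 0
      ⟨C, hC₀⟩ K :=
    ⟨fun _ _ => hv.lipschitzOnWith, fun _ _ => continuousOn_const, fun _ _ y _ => hC y, by simp⟩
  exact hpicard.exists_eq_forall_mem_Icc_hasDerivWithinAt₀

theorem dist_le_of_isIntegralCurveOn_Icc {a b : ℝ} (hab : a ≤ b) (hv : LipschitzWith K v)
    {γ₁ γ₂ : ℝ → E} (h₁ : IsIntegralCurveOn γ₁ (fun _ => v) (Icc a b))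
    (h₂ : IsIntegralCurveOn γ₂ (fun _ => v) (Icc a b)) :
    dist (γ₁ b) (γ₂ b) ≤ dist (γ₁ a) (γ₂ a) * Real.exp (K * (b - a)) := by
  have right_deriv {γ : ℝ → E} (h : IsIntegralCurveOn γ (fun _ => v) (Icc a b)) :
      ∀ t ∈ Ico a b, HasDerivWithinAt γ (v (γ t)) (Ici t) t := fun t ht =>
    (h t (Ico_subset_Icc_self ht)).mono_of_mem_nhdsWithin <|
      Filter.mem_of_superset (Icc_mem_nhdsGE ht.2) (Icc_subset_Icc_left ht.1)
  exact dist_le_of_trajectories_ODE (v := fun _ => v) (fun _ => hv) h₁.continuousOn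
    (right_deriv h₁) h₂.continuousOn (right_deriv h₂) le_rfl b (right_mem_Icc.2 hab)

/-- `ψ` maps the value at time `0` of every integral curve of `v` on `[0, 1]` to its value at
time `1`. -/
def IsTimeOneMap (v : E → E) (ψ : E → E) : Prop :=
  ∀ γ : ℝ → E, IsIntegralCurveOn γ (fun _ => v) (Icc 0 1) → γ 1 = ψ (γ 0)

theorem exists_isTimeOneMap [CompleteSpace E] (hv : LipschitzWith K v) (hC : ∀ x, ‖v x‖ ≤ C) :
    ∃ ψ, IsTimeOneMap v ψ ∧ ∃ L, LipschitzWith L ψ := by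
  choose α hα₀ hα using exists_isIntegralCurveOn_of_lipschitz_of_bounded hv hC
  refine ⟨fun x => α x 1, fun γ hγ => ?_, (Real.exp K).toNNReal,
    LipschitzWith.of_dist_le_mul fun x y => ?_⟩
  · have := dist_le_of_isIntegralCurveOn_Icc zero_le_one hv hγ (hα (γ 0))
    rw [hα₀, dist_self, zero_mul] at this
    exact dist_le_zero.1 this
  · have := dist_le_of_isIntegralCurveOn_Icc zero_le_one hv (hα x) (hα y)
    rw [hα₀, hα₀, sub_zero, mul_one, mul_comm] at this
    rwa [Real.coe_toNNReal _ (Real.exp_pos _).le]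

theorem isIntegralCurveOn_Icc_comp_one_sub {γ : ℝ → E}
    (h : IsIntegralCurveOn γ (fun _ => v) (Icc 0 1)) :
    IsIntegralCurveOn (fun t => γ (1 - t)) (fun _ x => -v x) (Icc 0 1) := by
  have hmaps : MapsTo (fun t : ℝ => 1 - t) (Icc 0 1) (Icc 0 1) := fun t ht =>
    ⟨by linarith [ht.2], by linarith [ht.1]⟩
  intro t ht
  have hsub : HasDerivWithinAt (fun t : ℝ => 1 - t) (-1) (Icc 0 1) t :=
    (hasDerivWithinAt_id t _).const_sub 1
  simpa using! (h (1 - t) (hmaps ht)).scomp t hsub hmaps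

theorem IsTimeOneMap.leftInverse [CompleteSpace E] (hv : LipschitzWith K v)
    (hC : ∀ x, ‖v x‖ ≤ C) {ψ ψ' : E → E} (hψ : IsTimeOneMap v ψ)
    (hψ' : IsTimeOneMap (fun x => -v x) ψ') : Function.LeftInverse ψ' ψ := fun x => by
  obtain ⟨γ, rfl, hγ⟩ := exists_isIntegralCurveOn_of_lipschitz_of_bounded hv hC x
  rw [← hψ γ hγ]
  simpa using (hψ' _ (isIntegralCurveOn_Icc_comp_one_sub hγ)).symm

theorem IsTimeOneMap.apply_eq_self {ψ : E → E} (hψ : IsTimeOneMap v ψ) {x : E} (hx : v x = 0) :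
    ψ x = x :=
  (hψ (fun _ => x) fun t _ => by simpa only [hx] using hasDerivWithinAt_const t _ x).symm

end TimeOneMap

section Trajectory

variable {E : Type*} [NormedAddCommGroup E] [NormedSpace ℝ E] {u w : E → ℝ → E} {a b : ℝ}
  {γ : ℝ → E}

/-- `γ` solves `dγ/dt = u(γ, ·)` on `[a, b]` in the Carathéodory (integral) sense. Integrability of
the velocity is required explicitly, the integral of a non-integrable function being `0`. -/
structure IsTrajectory (u : E → ℝ → E) (a b : ℝ) (γ : ℝ → E) : Prop where
  intervalIntegrable : IntervalIntegrable (fun s => u (γ s) s) volume a b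
  eq_add_integral : ∀ t ∈ Icc a b, γ t = γ a + ∫ s in a..t, u (γ s) s

theorem IsTrajectory.continuousOn (h : IsTrajectory u a b γ) : ContinuousOn γ (Icc a b) := by
  have hprim := intervalIntegral.continuousOn_primitive_interval' h.intervalIntegrable left_mem_uIcc
  exact (continuousOn_const.add (hprim.mono Icc_subset_uIcc)).congr h.eq_add_integral

theorem IsTrajectory.sub_eq_integral (h : IsTrajectory u a b γ) {s t : ℝ} (hs : s ∈ Icc a b)
    (ht : t ∈ Icc a b) : γ t - γ s = ∫ r in s..t, u (γ r) r := by
  have integrable (r : ℝ) (hr : r ∈ Icc a b) :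
      IntervalIntegrable (fun s => u (γ s) s) volume a r :=
    h.intervalIntegrable.mono_set (uIcc_subset_uIcc_left (Icc_subset_uIcc hr))
  rw [h.eq_add_integral t ht, h.eq_add_integral s hs, add_sub_add_left_eq_sub,
    intervalIntegral.integral_interval_sub_left (integrable t ht) (integrable s hs)]

theorem IsTrajectory.mono {a' b' : ℝ} (h : IsTrajectory u a b γ) (ha' : a' ∈ Icc a b)
    (hb' : b' ∈ Icc a b) : IsTrajectory u a' b' γ where
  intervalIntegrable :=
    h.intervalIntegrable.mono_set (uIcc_subset_uIcc (Icc_subset_uIcc ha') (Icc_subset_uIcc hb'))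
  eq_add_integral t ht := by
    rw [← h.sub_eq_integral ha' ⟨ha'.1.trans ht.1, ht.2.trans hb'.2⟩, add_sub_cancel]

theorem IsTrajectory.congr (hab : a ≤ b) (h : IsTrajectory u a b γ)
    (huw : ∀ x, ∀ t ∈ Ioo a b, u x t = w x t) : IsTrajectory w a b γ where
  intervalIntegrable := h.intervalIntegrable.congr_uIoo fun t ht =>
    huw _ t (by rwa [uIoo_of_le hab] at ht)
  eq_add_integral t ht := by
    rw [h.eq_add_integral t ht, intervalIntegral.integral_congr_uIoo fun s hs => huw _ s ?_]
    rw [uIoo_of_le ht.1] at hs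
    exact Ioo_subset_Ioo_right ht.2 hs

theorem IsTrajectory.comp_add_right (h : IsTrajectory u a b γ) (c : ℝ) :
    IsTrajectory (fun x t => u x (t + c)) (a - c) (b - c) fun t => γ (t + c) where
  intervalIntegrable := h.intervalIntegrable.comp_add_right c
  eq_add_integral t ht := by
    rw [intervalIntegral.integral_comp_add_right (fun s => u (γ s) s), sub_add_cancel]
    exact h.eq_add_integral _ ⟨by linarith [ht.1], by linarith [ht.2]⟩

theorem IsTrajectory.mem_of_isClosed (h : IsTrajectory u a b γ) {S : Set E} (hS : IsClosed S)
    (hu : ∀ x t, x ∉ S → u x t = 0) (ha : γ a ∈ S) {t : ℝ} (ht : t ∈ Icc a b) : γ t ∈ S := by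
  have hcompact : IsCompact (Icc a t ∩ γ ⁻¹' S) :=
    isCompact_Icc.of_isClosed_subset ((h.continuousOn.mono (Icc_subset_Icc_right ht.2))
      |>.preimage_isClosed_of_isClosed isClosed_Icc hS) inter_subset_left
  obtain ⟨s, ⟨hst, hs⟩, hmax⟩ := hcompact.exists_isGreatest ⟨a, left_mem_Icc.2 ht.1, ha⟩
  have hzero : ∀ r ∈ Ioc s t, u (γ r) r = 0 := fun r hr => hu _ _ fun hrS =>
    (hmax ⟨⟨hst.1.trans hr.1.le, hr.2⟩, hrS⟩).not_gt hr.1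
  have hconst := h.sub_eq_integral ⟨hst.1, hst.2.trans ht.2⟩ ht
  rw [intervalIntegral.integral_of_le hst.2, setIntegral_eq_zero_of_forall_eq_zero hzero,
    sub_eq_zero] at hconst
  exact hconst ▸ hs

theorem IsTrajectory.isIntegralCurveOn [CompleteSpace E] {v : E → E}
    (h : IsTrajectory (fun x _ => v x) a b γ) (hv : Continuous v) :
    IsIntegralCurveOn γ (fun _ => v) (Icc a b) := fun t ht =>
  (ODE.hasDerivWithinAt_picard_Icc (f := fun _ => v) (u := univ)
    (left_mem_Icc.2 (ht.1.trans ht.2)) (hv.comp continuous_snd).continuousOn h.continuousOn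
    (fun _ _ => mem_univ _) (γ a) ht).congr h.eq_add_integral (h.eq_add_integral t ht)

theorem IsTrajectory.isIntegralCurveOn_comp_mul [CompleteSpace E] {v : E → E} {T : ℝ} (hT : 0 < T)
    (h : IsTrajectory (fun x _ => T⁻¹ • v x) 0 T γ) (hv : Continuous v) :
    IsIntegralCurveOn (fun t => γ (t * T)) (fun _ => v) (Icc 0 1) := by
  have hcurve := ((h.isIntegralCurveOn (hv.const_smul _)).comp_mul T).mono (s' := Icc 0 1)
    fun t ht => ⟨by nlinarith [ht.1], by nlinarith [ht.2]⟩
  intro t ht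
  simpa [smul_smul, hT.ne'] using! hcurve t ht

end Trajectory

/-! ### Steerable maps -/

section Concatenation

variable {E : Type*} [NormedAddCommGroup E] {u₁ u₂ : E → ℝ → E} {τ T : ℝ} {γ : ℝ → E}

/-- The field that is `u₁` before time `τ` and afterwards is `u₂`, its clock restarted at `τ`. -/
def concatField (τ : ℝ) (u₁ u₂ : E → ℝ → E) (x : E) (t : ℝ) : E :=
  if t < τ then u₁ x t else u₂ x (t - τ)

theorem concatField_eq_zero {x : E} (h₁ : ∀ t, u₁ x t = 0) (h₂ : ∀ t, u₂ x t = 0) (t : ℝ) :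
    concatField τ u₁ u₂ x t = 0 := by
  simp only [concatField, h₁, h₂, ite_self]

theorem IsTrajectory.of_concatField_left [NormedSpace ℝ E]
    (h : IsTrajectory (concatField τ u₁ u₂) 0 T γ) (hτ : τ ∈ Icc 0 T) : IsTrajectory u₁ 0 τ γ :=
  (h.mono (left_mem_Icc.2 (hτ.1.trans hτ.2)) hτ).congr hτ.1 fun _ _ ht => if_pos ht.2

theorem IsTrajectory.of_concatField_right [NormedSpace ℝ E]
    (h : IsTrajectory (concatField τ u₁ u₂) 0 T γ) (hτ : τ ∈ Icc 0 T) :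
    IsTrajectory u₂ 0 (T - τ) fun t => γ (t + τ) := by
  have hright := (h.mono hτ (right_mem_Icc.2 (hτ.1.trans hτ.2))).comp_add_right τ
  rw [sub_self] at hright
  refine hright.congr (sub_nonneg.2 hτ.2) fun x t ht => ?_
  rw [concatField, if_neg (by linarith [ht.1]), add_sub_cancel_right]

theorem isRegularField_concatField {d : ℕ} {u₁ u₂ : Euc d → ℝ → Euc d} (h₁ : IsRegularField u₁)
    (h₂ : IsRegularField u₂) (τ : ℝ) : IsRegularField (concatField τ u₁ u₂) := by
  obtain ⟨⟨C₁, hC₁⟩, ⟨K₁, hK₁⟩, hm₁⟩ := h₁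
  obtain ⟨⟨C₂, hC₂⟩, ⟨K₂, hK₂⟩, hm₂⟩ := h₂
  refine ⟨⟨max C₁ C₂, fun x t => ?_⟩, ⟨max K₁ K₂, fun t => ?_⟩, fun x => ?_⟩
  · rw [concatField]
    split_ifs
    · exact (hC₁ x t).trans (le_max_left _ _)
    · exact (hC₂ x _).trans (le_max_right _ _)
  · unfold concatField
    split_ifs
    · exact (hK₁ t).weaken (le_max_left _ _)
    · exact (hK₂ _).weaken (le_max_right _ _)
  · exact Measurable.ite measurableSet_Iio (hm₁ x) ((hm₂ x).comp (measurable_id.sub_const τ))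

end Concatenation

section Flow

/- A solution of the integral equation may a priori have non-integrable velocity, where the integral
takes the junk value `0`. Past the first such time the velocity `f` is then a fixed measurable
function `h`, so `f` is integrable after all. -/
theorem intervalIntegrable_of_eq_of_not_intervalIntegrable {E : Type*} [NormedAddCommGroup E]
    {f h : ℝ → E} {C T : ℝ} (hT : 0 ≤ T) (hh : StronglyMeasurable h) (hC : ∀ t, ‖f t‖ ≤ C)
    (hfh : ∀ t, ¬ IntervalIntegrable f volume 0 t → f t = h t) :
    IntervalIntegrable f volume 0 T := by
  set A : Set ℝ := {t | t ∈ Icc 0 T ∧ IntervalIntegrable f volume 0 t}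
  have hA₀ : (0 : ℝ) ∈ A := ⟨⟨le_rfl, hT⟩, IntervalIntegrable.refl⟩
  have hAb : BddAbove A := ⟨T, fun t ht => ht.1.2⟩
  obtain ⟨τ, -, hτ, hτA⟩ := exists_seq_tendsto_sSup ⟨0, hA₀⟩ hAb
  have hbefore : AEStronglyMeasurable f (volume.restrict (⋃ n, Ioc 0 (τ n))) :=
    aestronglyMeasurable_iUnion_iff.2 fun n =>
      ((intervalIntegrable_iff_integrableOn_Ioc_of_le (hτA n).1.1).1
        (hτA n).2).aestronglyMeasurable
  have hafter : AEStronglyMeasurable f (volume.restrict (Ioc (sSup A) T)) := by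
    refine hh.aestronglyMeasurable.congr ?_
    filter_upwards [ae_restrict_mem measurableSet_Ioc] with t ht
    exact (hfh t fun hft => ht.1.not_ge
      (le_csSup hAb ⟨⟨(le_csSup hAb hA₀).trans ht.1.le, ht.2⟩, hft⟩)).symm
  have hat : AEStronglyMeasurable f (volume.restrict {sSup A}) := by
    simp only [Measure.restrict_singleton, Real.volume_singleton, zero_smul,
      aestronglyMeasurable_zero_measure]
  have hcover : Ioc 0 T ⊆ (⋃ n, Ioc 0 (τ n)) ∪ {sSup A} ∪ Ioc (sSup A) T := by
    intro t ht
    rcases lt_trichotomy t (sSup A) with hlt | heq | hgt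
    · obtain ⟨n, hn⟩ := (hτ.eventually (lt_mem_nhds hlt)).exists
      exact Or.inl (Or.inl (mem_iUnion.2 ⟨n, ht.1, hn.le⟩))
    · exact Or.inl (Or.inr heq)
    · exact Or.inr ⟨hgt, ht.2⟩
  rw [intervalIntegrable_iff_integrableOn_Ioc_of_le hT]
  have hmeas := (aestronglyMeasurable_union_iff.2
    ⟨aestronglyMeasurable_union_iff.2 ⟨hbefore, hat⟩, hafter⟩).mono_set hcover
  exact Integrable.of_bound hmeas C (.of_forall hC)

theorem IsFlow.apply_zero {d : ℕ} {u : Euc d → ℝ → Euc d} {Φ : ℝ → Euc d → Euc d}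
    (hΦ : IsFlow u Φ) (x : Euc d) : Φ 0 x = x := by
  rw [hΦ x 0, intervalIntegral.integral_same, add_zero]

theorem IsFlow.isTrajectory {d : ℕ} {u : Euc d → ℝ → Euc d} {Φ : ℝ → Euc d → Euc d}
    (hΦ : IsFlow u Φ) (hu : IsRegularField u) {T : ℝ} (hT : 0 ≤ T) (x : Euc d) :
    IsTrajectory u 0 T fun t => Φ t x where
  intervalIntegrable := by
    obtain ⟨⟨C, hC⟩, -, hmeas⟩ := hu
    refine intervalIntegrable_of_eq_of_not_intervalIntegrable hT (hmeas x).stronglyMeasurable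
      (fun t => hC (Φ t x) t) fun t ht => ?_
    rw [hΦ x t, intervalIntegral.integral_undef ht, add_zero]
  eq_add_integral t _ := by
    rw [hΦ.apply_zero x]
    exact hΦ x t

end Flow

section Steerable

variable {d : ℕ} {V W : Set (Euc d)} {f g : Euc d → Euc d}

/-- `g` is, for every `T > 0`, the time-`T` map of a regular field supported in `V`. The end points
are prescribed for all trajectories, so that no choice of a flow is involved. -/
structure Steerable (V : Set (Euc d)) (g : Euc d → Euc d) : Prop where
  quasiMeasurePreserving : Measure.QuasiMeasurePreserving g volume volume
  eqOn_compl : EqOn g id Vᶜ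
  exists_field : ∀ T : ℝ, 0 < T → ∃ u : Euc d → ℝ → Euc d, IsRegularField u ∧
    (∀ x t, x ∉ V → u x t = 0) ∧ ∀ γ, IsTrajectory u 0 T γ → γ T = g (γ 0)

theorem Steerable.id (V : Set (Euc d)) : Steerable V id where
  quasiMeasurePreserving := .id volume
  eqOn_compl := eqOn_refl _ _
  exists_field T hT :=
    ⟨fun _ _ => 0, ⟨⟨0, by simp⟩, ⟨0, fun _ => LipschitzWith.const _⟩, fun _ => measurable_const⟩,
      fun _ _ _ => rfl, fun γ hγ => by simpa using hγ.eq_add_integral T (right_mem_Icc.2 hT.le)⟩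

theorem Steerable.measurable (h : Steerable V g) : Measurable g :=
  h.quasiMeasurePreserving.measurable

theorem Steerable.mono (h : Steerable V g) (hVW : V ⊆ W) : Steerable W g where
  quasiMeasurePreserving := h.quasiMeasurePreserving
  eqOn_compl := h.eqOn_compl.mono (compl_subset_compl.2 hVW)
  exists_field T hT := by
    obtain ⟨u, hu, hsupp, hend⟩ := h.exists_field T hT
    exact ⟨u, hu, fun x t hx => hsupp x t (notMem_subset hVW hx), hend⟩

theorem Steerable.comp (hg : Steerable V g) (hf : Steerable V f) : Steerable V (g ∘ f) where
  quasiMeasurePreserving := hg.quasiMeasurePreserving.comp hf.quasiMeasurePreserving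
  eqOn_compl x hx := by
    rw [Function.comp_apply, hf.eqOn_compl hx, id_eq, hg.eqOn_compl hx, id_eq]
  exists_field T hT := by
    obtain ⟨u₁, hu₁, hsupp₁, hend₁⟩ := hf.exists_field (T / 2) (half_pos hT)
    obtain ⟨u₂, hu₂, hsupp₂, hend₂⟩ := hg.exists_field (T / 2) (half_pos hT)
    refine ⟨concatField (T / 2) u₁ u₂, isRegularField_concatField hu₁ hu₂ _, fun x t hx =>
      concatField_eq_zero (fun s => hsupp₁ x s hx) (fun s => hsupp₂ x s hx) t, fun γ hγ => ?_⟩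
    have hhalf : T / 2 ∈ Icc 0 T := ⟨(half_pos hT).le, half_le_self hT.le⟩
    have hsecond := hγ.of_concatField_right hhalf
    rw [sub_half] at hsecond
    rw [Function.comp_apply, ← hend₁ γ (hγ.of_concatField_left hhalf)]
    simpa only [add_halves, zero_add] using hend₂ _ hsecond

theorem measure_image_eq_zero_of_lipschitzWith {E : Type*} [NormedAddCommGroup E]
    [NormedSpace ℝ E] [FiniteDimensional ℝ E] [MeasurableSpace E] [BorelSpace E] {μ : Measure E}
    [μ.IsAddHaarMeasure] {f : E → E} {L : ℝ≥0} (hf : LipschitzWith L f) {N : Set E}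
    (hN : μ N = 0) : μ (f '' N) = 0 := by
  set μH := Measure.hausdorffMeasure (X := E) (Module.finrank ℝ E)
  have hμH : μH N = 0 := Measure.absolutelyContinuous_isAddHaarMeasure μH μ hN
  refine Measure.absolutelyContinuous_isAddHaarMeasure μ μH (nonpos_iff_eq_zero.1 ?_)
  calc μH (f '' N) ≤ (L : ℝ≥0∞) ^ (Module.finrank ℝ E : ℝ) * μH N :=
        hf.hausdorffMeasure_image_le (Nat.cast_nonneg _) N
    _ = 0 := by rw [hμH, mul_zero]

theorem isRegularField_smul_of_autonomous {v : Euc d → Euc d} {K : ℝ≥0} {C : ℝ}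
    (hv : LipschitzWith K v) (hC : ∀ x, ‖v x‖ ≤ C) (c : ℝ) : IsRegularField fun x _ => c • v x := by
  refine ⟨⟨‖c‖ * C, fun x _ => ?_⟩, ⟨‖c‖₊ * K, fun _ => (lipschitzWith_smul c).comp hv⟩,
    fun _ => measurable_const⟩
  rw [norm_smul]
  exact mul_le_mul_of_nonneg_left (hC x) (norm_nonneg c)

theorem exists_steerable_isTimeOneMap {v : Euc d → Euc d} {K : ℝ≥0} {C : ℝ}
    (hv : LipschitzWith K v) (hC : ∀ x, ‖v x‖ ≤ C) (hsupp : ∀ x, x ∉ V → v x = 0) :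
    ∃ g, Steerable V g ∧ IsTimeOneMap v g := by
  obtain ⟨ψ, hψ, L, hL⟩ := exists_isTimeOneMap hv hC
  obtain ⟨ψ', hψ', L', hL'⟩ :=
    exists_isTimeOneMap (v := fun x => -v x) hv.neg (fun x => (norm_neg (v x)).trans_le (hC x))
  have hinv : Function.LeftInverse ψ' ψ := hψ.leftInverse hv hC hψ'
  refine ⟨ψ, ⟨⟨hL.continuous.measurable, ?_⟩, fun x hx => hψ.apply_eq_self (hsupp x hx),
    fun T hT => ⟨fun x _ => T⁻¹ • v x, isRegularField_smul_of_autonomous hv hC _,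
      fun x _ hx => by simp only [hsupp x hx, smul_zero], fun γ hγ => ?_⟩⟩, hψ⟩
  · refine Measure.AbsolutelyContinuous.mk fun N hNm hN => ?_
    rw [Measure.map_apply hL.continuous.measurable hNm]
    exact measure_mono_null (preimage_subset_image_of_inverse hinv N)
      (measure_image_eq_zero_of_lipschitzWith hL' hN)
  · simpa using hψ _ (hγ.isIntegralCurveOn_comp_mul hT hv.continuous)

end Steerable

/-! ### Contraction towards a point -/

section Contraction

variable {E : Type*} [NormedAddCommGroup E] [NormedSpace ℝ E]

theorem exists_lipschitzWith_bounded_eqOn_of_isCompact [FiniteDimensional ℝ E] {F : E → E}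
    (hF : ContDiff ℝ 1 F) {K V : Set E} (hK : IsCompact K) (hV : IsOpen V) (hKV : K ⊆ V) :
    ∃ v : E → E, EqOn v F K ∧ (∀ x, x ∉ V → v x = 0) ∧ (∃ L, LipschitzWith L v) ∧
      ∃ C, ∀ x, ‖v x‖ ≤ C := by
  obtain ⟨W, hW, hKW, hWV, hWc⟩ := exists_open_between_and_isCompact_closure hK hV hKV
  obtain ⟨χ, hχ₀, hχ₁, -⟩ := exists_contMDiffMap_zero_one_of_isClosed (n := 1)
    (modelWithCornersSelf ℝ E) hW.isClosed_compl hK.isClosed (disjoint_compl_left_iff_subset.2 hKW)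
  have hzero (x : E) (hx : x ∉ W) : χ x • F x = 0 := by
    rw [show χ x = 0 from hχ₀ hx, zero_smul]
  have hsmooth : ContDiff ℝ 1 fun x => χ x • F x := χ.contMDiff.contDiff.smul hF
  have hcompact : HasCompactSupport fun x => χ x • F x :=
    HasCompactSupport.intro hWc fun x hx => hzero x (notMem_subset subset_closure hx)
  refine ⟨fun x => χ x • F x, fun x hx => ?_,
    fun x hx => hzero x (notMem_subset (subset_closure.trans hWV) hx),
    ContDiff.lipschitzWith_of_hasCompactSupport hcompact hsmooth one_ne_zero,
    hcompact.exists_bound_of_continuous hsmooth.continuous⟩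
  simp only [show χ x = 1 from hχ₁ hx, one_smul]

theorem isIntegralCurve_add_exp_smul (R : ℝ) (q x : E) :
    IsIntegralCurve (fun t => q + Real.exp (-R * t) • (x - q)) fun _ y => -R • (y - q) := by
  intro t
  have hexp : HasDerivAt (fun t => Real.exp (-R * t)) (Real.exp (-R * t) * -R) t := by
    simpa using ((hasDerivAt_id t).const_mul (-R)).exp
  simpa only [add_sub_cancel_left, smul_smul, mul_comm] using
    (hexp.smul_const (x - q)).const_add q

theorem exists_pos_exp_neg_mul_lt (M : ℝ) {r : ℝ} (hr : 0 < r) :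
    ∃ R > 0, Real.exp (-R) * M < r := by
  have hlim : Filter.Tendsto (fun R => Real.exp (-R) * M) Filter.atTop (nhds 0) := by
    simpa using Real.tendsto_exp_neg_atTop_nhds_zero.mul_const M
  exact ((Filter.eventually_gt_atTop 0).and (hlim.eventually (gt_mem_nhds hr))).exists

end Contraction

section Collect

variable {d : ℕ} {V O : Set (Euc d)} {q : Euc d}

theorem exists_steerable_mapsTo_ball (hV : IsOpen V) (hVq : StarConvex ℝ q V) {K : Set (Euc d)}
    (hK : IsCompact K) (hKV : K ⊆ V) {r : ℝ} (hr : 0 < r) :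
    ∃ g, Steerable V g ∧ MapsTo g K (Metric.ball q r) := by
  obtain ⟨M, hM⟩ := hK.isBounded.subset_ball q
  obtain ⟨R, hR, hRr⟩ := exists_pos_exp_neg_mul_lt M hr
  set cone := (fun p : ℝ × Euc d => q + p.1 • (p.2 - q)) '' (Icc 0 1 ×ˢ K)
  have hcone : IsCompact cone := (isCompact_Icc.prod hK).image (by fun_prop)
  have hconeV : cone ⊆ V := by
    rintro _ ⟨⟨t, x⟩, ⟨ht, hx⟩, rfl⟩
    exact hVq.add_smul_sub_mem (hKV hx) ht.1 ht.2
  obtain ⟨v, hvcone, hvV, ⟨L, hL⟩, C, hC⟩ := exists_lipschitzWith_bounded_eqOn_of_isCompact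
    (F := fun x => -R • (x - q)) (by fun_prop) hcone hV hconeV
  obtain ⟨g, hg, hgv⟩ := exists_steerable_isTimeOneMap hL hC hvV
  refine ⟨g, hg, fun x hx => ?_⟩
  have hcurve : IsIntegralCurveOn (fun t => q + Real.exp (-R * t) • (x - q)) (fun _ => v)
      (Icc 0 1) := fun t ht => by
    have hmem : q + Real.exp (-R * t) • (x - q) ∈ cone :=
      ⟨(Real.exp (-R * t), x), ⟨⟨(Real.exp_pos _).le,
        Real.exp_le_one_iff.2 (by nlinarith [ht.1])⟩, hx⟩, rfl⟩
    simpa only [hvcone hmem] using (isIntegralCurve_add_exp_smul R q x t).hasDerivWithinAt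
  have hgx : g x = q + Real.exp (-R) • (x - q) := by simpa using (hgv _ hcurve).symm
  rw [hgx, mem_ball_iff_norm, add_sub_cancel_left, norm_smul, Real.norm_eq_abs, Real.abs_exp]
  refine lt_of_le_of_lt ?_ hRr
  gcongr
  exact (mem_ball_iff_norm.1 (hM hx)).le

theorem Steerable.union_subset {g : Euc d → Euc d} (hg : Steerable V g) (O : Set (Euc d)) :
    V ∪ O ⊆ g ⁻¹' O ∪ V \ g ⁻¹' O := by
  have hfixed : O \ V ⊆ g ⁻¹' O := fun x hx => by
    rw [mem_preimage, hg.eqOn_compl hx.2]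
    exact hx.1
  rw [union_sdiff_self, union_comm V, ← sdiff_union_self (s := O)]
  exact union_subset_union_left V hfixed

theorem exists_steerable_measureReal_union_le (hV : IsOpen V) (hVq : StarConvex ℝ q V)
    (hO : IsOpen O) (hq : q ∈ O) (μ : Measure (Euc d)) [IsFiniteMeasure μ] {η : ℝ} (hη : 0 < η) :
    ∃ g, Steerable V g ∧ μ.real (V ∪ O) ≤ μ.real (g ⁻¹' O) + η := by
  obtain ⟨K, hKV, hK, hμK⟩ := hV.measurableSet.exists_isCompact_sdiff_lt (μ := μ)
    (measure_ne_top _ _) (ENNReal.ofReal_pos.2 hη).ne'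
  obtain ⟨r, hr, hrO⟩ := Metric.isOpen_iff.1 hO q hq
  obtain ⟨g, hg, hgK⟩ := exists_steerable_mapsTo_ball hV hVq hK hKV hr
  refine ⟨g, hg, ?_⟩
  calc μ.real (V ∪ O) ≤ μ.real (g ⁻¹' O ∪ V \ g ⁻¹' O) := measureReal_mono (hg.union_subset O)
    _ ≤ μ.real (g ⁻¹' O) + μ.real (V \ g ⁻¹' O) := measureReal_union_le _ _
    _ ≤ μ.real (g ⁻¹' O) + μ.real (V \ K) := by
        have hKg : K ⊆ g ⁻¹' O := fun x hx => hrO (hgK hx)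
        gcongr
        finiteness
    _ ≤ μ.real (g ⁻¹' O) + η := by
        gcongr
        exact ENNReal.toReal_le_of_le_ofReal hη.le hμK.le

end Collect

/-! ### Gathering along chains -/

section ChainUnion

variable {X : Type*} {𝒜 : Set (Set X)} {B U U' V : Set X}

/-- The sets obtained from `B` by finitely often adjoining a member of `𝒜` that meets what has been
built so far. -/
inductive ChainUnion (𝒜 : Set (Set X)) (B : Set X) : Set X → Prop
  | base : ChainUnion 𝒜 B B
  | adjoin {U A : Set X} : ChainUnion 𝒜 B U → A ∈ 𝒜 → (U ∩ A).Nonempty → ChainUnion 𝒜 B (U ∪ A)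

theorem ChainUnion.of_forall {p : Set X → Prop} (h : ChainUnion 𝒜 B U)
    (hunion : ∀ s t, p s → p t → p (s ∪ t)) (hB : p B) (h𝒜 : ∀ A ∈ 𝒜, p A) : p U := by
  induction h with
  | base => exact hB
  | adjoin _ hA _ ih => exact hunion _ _ ih (h𝒜 _ hA)

theorem ChainUnion.base_subset (h : ChainUnion 𝒜 B U) : B ⊆ U := by
  induction h with
  | base => exact subset_rfl
  | adjoin _ _ _ ih => exact ih.trans subset_union_left

theorem ChainUnion.union (h : ChainUnion 𝒜 B U) (h' : ChainUnion 𝒜 B U') :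
    ChainUnion 𝒜 B (U ∪ U') := by
  induction h' with
  | base => rwa [union_eq_left.2 h.base_subset]
  | adjoin _ hA hne ih =>
    rw [← union_assoc]
    exact ih.adjoin hA (hne.mono (inter_subset_inter_left _ subset_union_right))

variable [TopologicalSpace X]

theorem ChainUnion.isOpen (h : ChainUnion 𝒜 B U) (hB : IsOpen B) (h𝒜 : ∀ A ∈ 𝒜, IsOpen A) :
    IsOpen U :=
  h.of_forall (fun _ _ => IsOpen.union) hB h𝒜

theorem ChainUnion.isPreconnected (h : ChainUnion 𝒜 B U) (hB : IsPreconnected B)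
    (h𝒜 : ∀ A ∈ 𝒜, IsPreconnected A) : IsPreconnected U := by
  induction h with
  | base => exact hB
  | adjoin _ hA hne ih => exact ih.union' hne (h𝒜 _ hA)

theorem subset_sUnion_chainUnion (hV : IsPreconnected V) (h𝒜 : ∀ A ∈ 𝒜, IsOpen A)
    (hcover : V ⊆ ⋃₀ 𝒜) (hB : IsOpen B) (hVB : (V ∩ B).Nonempty) :
    V ⊆ ⋃₀ {U | ChainUnion 𝒜 B U} := by
  refine hV.subset_of_closure_inter_subset (isOpen_sUnion fun U hU => hU.isOpen hB h𝒜)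
    (hVB.mono (inter_subset_inter_right V (subset_sUnion_of_mem .base))) ?_
  rintro x ⟨hx, hxV⟩
  obtain ⟨A, hA, hxA⟩ := hcover hxV
  obtain ⟨y, hyA, U, hU, hyU⟩ := mem_closure_iff.1 hx A (h𝒜 A hA) hxA
  exact ⟨U ∪ A, hU.adjoin hA ⟨y, hyU, hyA⟩, Or.inr hxA⟩

theorem exists_chainUnion_superset (hV : IsPreconnected V) (h𝒜 : ∀ A ∈ 𝒜, IsOpen A)
    (hcover : V ⊆ ⋃₀ 𝒜) (hB : IsOpen B) (hVB : (V ∩ B).Nonempty) {K : Set X} (hK : IsCompact K)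
    (hKV : K ⊆ V) : ∃ U, ChainUnion 𝒜 B U ∧ K ⊆ U := by
  have hcoverK := hKV.trans (subset_sUnion_chainUnion hV h𝒜 hcover hB hVB)
  rw [sUnion_eq_iUnion] at hcoverK
  have : Nonempty {U | ChainUnion 𝒜 B U} := ⟨⟨B, .base⟩⟩
  obtain ⟨U, hU⟩ := hK.elim_directed_cover _ (fun U => U.2.isOpen hB h𝒜) hcoverK fun U U' =>
    ⟨⟨_, U.2.union U'.2⟩, subset_union_left, subset_union_right⟩
  exact ⟨U, U.2, hU⟩

end ChainUnion

section Gather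

variable {d : ℕ} {𝒜 : Set (Set (Euc d))} {B U : Set (Euc d)}

theorem ChainUnion.exists_steerable_measureReal_le (h : ChainUnion 𝒜 B U)
    (h𝒜 : ∀ A ∈ 𝒜, IsOpen A ∧ Convex ℝ A) (hB : IsOpen B) {η : ℝ} (hη : 0 < η)
    (μ : Measure (Euc d)) [IsFiniteMeasure μ] :
    ∃ g, Steerable U g ∧ μ.real U ≤ μ.real (g ⁻¹' B) + η := by
  induction h generalizing μ η with
  | base => exact ⟨id, .id _, by simpa using hη.le⟩
  | @adjoin U A hU hA hne ih =>
    have hUo : IsOpen U := hU.isOpen hB fun A hA => (h𝒜 A hA).1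
    obtain ⟨q, hqU, hqA⟩ := hne
    obtain ⟨f, hf, hμf⟩ := exists_steerable_measureReal_union_le (h𝒜 A hA).1
      ((h𝒜 A hA).2.starConvex hqA) hUo hqU μ (half_pos hη)
    obtain ⟨g, hg, hμg⟩ := ih (half_pos hη) (μ.map f)
    rw [map_measureReal_apply hf.measurable hUo.measurableSet,
      map_measureReal_apply hf.measurable (hg.measurable hB.measurableSet)] at hμg
    refine ⟨g ∘ f, (hg.mono subset_union_left).comp (hf.mono subset_union_right), ?_⟩
    rw [union_comm, preimage_comp]
    linarith

theorem exists_steerable_measureReal_le_of_isPreconnected (hU : IsOpen U) (hUc : IsPreconnected U)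
    (hB : IsOpen B) (hBU : B ⊆ U) (hBne : B.Nonempty) {η : ℝ} (hη : 0 < η) (μ : Measure (Euc d))
    [IsFiniteMeasure μ] : ∃ g, Steerable U g ∧ μ.real U ≤ μ.real (g ⁻¹' B) + η := by
  obtain ⟨K, hKU, hK, hμK⟩ := hU.measurableSet.exists_isCompact_sdiff_lt (μ := μ)
    (measure_ne_top _ _) (ENNReal.ofReal_pos.2 (half_pos hη)).ne'
  set 𝒜 : Set (Set (Euc d)) := {A | (IsOpen A ∧ Convex ℝ A) ∧ A ⊆ U}
  have hcover : U ⊆ ⋃₀ 𝒜 := fun x hx => by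
    obtain ⟨r, hr, hrU⟩ := Metric.isOpen_iff.1 hU x hx
    exact ⟨_, ⟨⟨Metric.isOpen_ball, convex_ball x r⟩, hrU⟩, Metric.mem_ball_self hr⟩
  obtain ⟨W, hW, hKW⟩ := exists_chainUnion_superset hUc (fun A hA => hA.1.1) hcover hB
    (by rwa [inter_eq_right.2 hBU]) hK hKU
  have hWU : W ⊆ U := hW.of_forall (fun _ _ => union_subset) hBU fun A hA => hA.2
  obtain ⟨g, hg, hμg⟩ := hW.exists_steerable_measureReal_le (fun A hA => hA.1) hB (half_pos hη) μ
  refine ⟨g, hg.mono hWU, ?_⟩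
  calc μ.real U ≤ μ.real K + μ.real (U \ K) := by
        rw [← union_sdiff_cancel hKU]
        simpa using measureReal_union_le (μ := μ) K (U \ K)
    _ ≤ μ.real W + η / 2 := add_le_add (measureReal_mono hKW)
        (ENNReal.toReal_le_of_le_ofReal (half_pos hη).le hμK.le)
    _ ≤ μ.real (g ⁻¹' B) + η := by linarith

end Gather

/-! ### Splitting by a hyperplane -/

section Level

theorem exists_measureReal_Iio_eq {ν : Measure ℝ} [IsFiniteMeasure ν] [NullSingletonClass ν]
    {a b m : ℝ} (hab : a ≤ b) (hν : ν (Icc a b)ᶜ = 0) (hm₀ : 0 ≤ m) (hm : m ≤ ν.real univ) :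
    ∃ c ∈ Icc a b, ν.real (Iio c) = m := by
  have hcont : Continuous fun t => ∫ _ in a..t, (1 : ℝ) ∂ν :=
    intervalIntegral.continuous_primitive (fun _ _ => intervalIntegrable_const) a
  have hprim (t : ℝ) (ht : t ∈ Icc a b) : ∫ _ in a..t, (1 : ℝ) ∂ν = ν.real (Icc a t) := by
    simp [intervalIntegral.integral_of_le ht.1, measureReal_congr Ioc_ae_eq_Icc]
  have htotal : ν.real (Icc a b) = ν.real univ := measureReal_congr (ae_eq_univ.2 hν)
  obtain ⟨c, hc, hcm⟩ := intermediate_value_Icc hab hcont.continuousOn (show m ∈ Icc _ _ by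
    simpa [hprim b (right_mem_Icc.2 hab), htotal] using ⟨hm₀, hm⟩)
  refine ⟨c, hc, ?_⟩
  have hIio : (Icc a b ∩ Iic c : Set ℝ) =ᵐ[ν] Iio c := by
    simpa using ((ae_eq_univ.2 hν).inter (Iio_ae_eq_Iic (μ := ν) (a := c)).symm)
  have hinter : Icc a b ∩ Iic c = Icc a c :=
    Set.ext fun x => ⟨fun hx => ⟨hx.1.1, hx.2⟩, fun hx => ⟨⟨hx.1, hx.2.trans hc.2⟩, hx.2⟩⟩
  exact (measureReal_congr hIio).symm.trans (hinter ▸ (hprim c hc).symm.trans hcm)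

variable {E : Type*} [NormedAddCommGroup E] [NormedSpace ℝ E] [FiniteDimensional ℝ E]
  [MeasurableSpace E] [BorelSpace E]

theorem nullSingletonClass_map_of_absolutelyContinuous {μ lam : Measure E} [lam.IsAddHaarMeasure]
    (hμ : μ ≪ lam) {f : E →L[ℝ] ℝ} (hf : f ≠ 0) : NullSingletonClass (μ.map f) where
  measure_singleton c := by
    rw [Measure.map_apply f.continuous.measurable (measurableSet_singleton c)]
    have hsurj : Function.Surjective f.toLinearMap :=
      LinearMap.surjective fun h => hf (ContinuousLinearMap.coe_injective h)
    have hae := (ae_comp_linearMap_mem_iff f.toLinearMap lam volume hsurj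
      (measurableSet_singleton c).compl).2 (Measure.ae_ne volume c)
    exact hμ (by simpa [ae_iff, preimage] using! hae)

theorem exists_measureReal_inter_halfSpace_eq {μ lam : Measure E} [lam.IsAddHaarMeasure]
    [IsFiniteMeasure μ] (hμ : μ ≪ lam) {f : E →L[ℝ] ℝ} (hf : f ≠ 0) {S : Set E} {a b m : ℝ}
    (hab : a ≤ b) (hSf : MapsTo f S (Icc a b)) (hm₀ : 0 ≤ m)
    (hm : m ≤ μ.real S) :
    ∃ c ∈ Icc a b, μ.real (S ∩ f ⁻¹' Iio c) = m ∧ μ.real (S ∩ f ⁻¹' Ioi c) = μ.real S - m := by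
  have hfm : Measurable f := f.continuous.measurable
  set ν := (μ.restrict S).map f
  have hν (s : Set ℝ) (hs : MeasurableSet s) : ν.real s = μ.real (S ∩ f ⁻¹' s) := by
    rw [map_measureReal_apply hfm hs, measureReal_restrict_apply (hfm hs), inter_comm]
  have hνuniv : ν.real univ = μ.real S := by rw [hν _ .univ, preimage_univ, inter_univ]
  have hνIcc : ν (Icc a b)ᶜ = 0 := by
    rw [Measure.map_apply hfm measurableSet_Icc.compl,
      Measure.restrict_apply (hfm measurableSet_Icc.compl)]
    exact measure_mono_null (fun x hx => hx.1 (hSf hx.2)) measure_empty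
  have : NullSingletonClass ν := nullSingletonClass_map_of_absolutelyContinuous
    (Measure.absolutelyContinuous_of_le Measure.restrict_le_self |>.trans hμ) hf
  obtain ⟨c, hc, hcm⟩ := exists_measureReal_Iio_eq hab hνIcc hm₀ (hm.trans_eq hνuniv.symm)
  refine ⟨c, hc, by rw [← hν _ measurableSet_Iio, hcm], ?_⟩
  rw [← hν _ measurableSet_Ioi, measureReal_congr Ioi_ae_eq_Ici, ← compl_Iio,
    measureReal_compl measurableSet_Iio, hcm, hνuniv]

end Level

section Split

variable {d : ℕ} {μ : Measure (Euc d)} [IsFiniteMeasure μ] {η : ℝ}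

theorem exists_steerable_union_of_disjoint {V₁ V₂ O₁ O₂ : Set (Euc d)} (hdisj : Disjoint V₁ V₂)
    (hV₁ : IsOpen V₁) (hV₂ : IsOpen V₂) (hc₁ : Convex ℝ V₁) (hc₂ : Convex ℝ V₂)
    (hO₁ : IsOpen O₁) (hO₂ : IsOpen O₂) (h₁ : (V₁ ∩ O₁).Nonempty) (h₂ : (V₂ ∩ O₂).Nonempty)
    (hη : 0 < η) :
    ∃ g, Steerable (V₁ ∪ V₂) g ∧ μ.real V₁ ≤ μ.real (g ⁻¹' O₁) + η ∧
      μ.real V₂ ≤ μ.real (g ⁻¹' O₂) + η := by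
  obtain ⟨q₁, hqV₁, hqO₁⟩ := h₁
  obtain ⟨q₂, hqV₂, hqO₂⟩ := h₂
  obtain ⟨g₁, hg₁, hμg₁⟩ := exists_steerable_measureReal_union_le hV₁ (hc₁.starConvex hqV₁)
    (hV₁.inter hO₁) ⟨hqV₁, hqO₁⟩ μ hη
  obtain ⟨g₂, hg₂, hμg₂⟩ := exists_steerable_measureReal_union_le hV₂ (hc₂.starConvex hqV₂)
    hO₂ hqO₂ (μ.map g₁) hη
  refine ⟨g₂ ∘ g₁, (hg₂.mono subset_union_right).comp (hg₁.mono subset_union_left), ?_, ?_⟩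
  · have hfixed : g₁ ⁻¹' (V₁ ∩ O₁) ⊆ g₂ ∘ g₁ ⁻¹' O₁ := fun x hx => by
      rw [mem_preimage, Function.comp_apply, hg₂.eqOn_compl (hdisj.notMem_of_mem_left hx.1)]
      exact hx.2
    calc μ.real V₁ ≤ μ.real (V₁ ∪ V₁ ∩ O₁) := measureReal_mono subset_union_left
      _ ≤ μ.real (g₁ ⁻¹' (V₁ ∩ O₁)) + η := hμg₁
      _ ≤ μ.real (g₂ ∘ g₁ ⁻¹' O₁) + η := add_le_add_left (measureReal_mono hfixed) η
  · have hfixed : V₂ ⊆ g₁ ⁻¹' (V₂ ∪ O₂) := fun x hx => by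
      rw [mem_preimage, hg₁.eqOn_compl (hdisj.notMem_of_mem_right hx)]
      exact Or.inl hx
    rw [map_measureReal_apply hg₁.measurable (hV₂.union hO₂).measurableSet,
      map_measureReal_apply hg₁.measurable (hg₂.measurable hO₂.measurableSet)] at hμg₂
    exact (measureReal_mono hfixed).trans hμg₂

theorem Steerable.map_absolutelyContinuous {V : Set (Euc d)} {g : Euc d → Euc d}
    (hg : Steerable V g) {μ : Measure (Euc d)} (hμ : μ ≪ volume) : μ.map g ≪ volume :=
  (hμ.map hg.measurable).trans hg.quasiMeasurePreserving.absolutelyContinuous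

theorem exists_steerable_split_of_mapsTo_Icc {B S O O' : Set (Euc d)} (hμ : μ ≪ volume)
    (hB : IsOpen B) (hBc : Convex ℝ B) (hSB : S ⊆ B) {f : Euc d →L[ℝ] ℝ} {a b : ℝ} (hab : a ≤ b)
    (hSf : MapsTo f S (Icc a b)) (hO : IsOpen O) (hO' : IsOpen O') {q q' : Euc d}
    (hq : q ∈ B ∩ O) (hq' : q' ∈ B ∩ O') (hfq : f q < a) (hfq' : b < f q') {m : ℝ} (hm₀ : 0 ≤ m)
    (hm : m ≤ μ.real S) (hη : 0 < η) :
    ∃ g, Steerable B g ∧ m ≤ μ.real (g ⁻¹' O) + η ∧ μ.real S - m ≤ μ.real (g ⁻¹' O') + η := by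
  have hf : f ≠ 0 := by
    rintro rfl
    exact (hfq.trans_le hab).not_ge hfq'.le
  obtain ⟨c, hc, hlow, hhigh⟩ := exists_measureReal_inter_halfSpace_eq hμ hf hab hSf hm₀ hm
  have hdisj : Disjoint (B ∩ f ⁻¹' Iio c) (B ∩ f ⁻¹' Ioi c) :=
    (Ioi_disjoint_Iio_same.symm.preimage f).mono inter_subset_right inter_subset_right
  obtain ⟨g, hg, hμlow, hμhigh⟩ := exists_steerable_union_of_disjoint (μ := μ) hdisj
    (hB.inter (isOpen_Iio.preimage f.continuous)) (hB.inter (isOpen_Ioi.preimage f.continuous))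
    (hBc.inter ((convex_Iio c).linear_preimage f.toLinearMap))
    (hBc.inter ((convex_Ioi c).linear_preimage f.toLinearMap)) hO hO'
    ⟨q, ⟨hq.1, hfq.trans_le hc.1⟩, hq.2⟩ ⟨q', ⟨hq'.1, hc.2.trans_lt hfq'⟩, hq'.2⟩ hη
  have hcut (I : Set ℝ) : μ.real (S ∩ f ⁻¹' I) ≤ μ.real (B ∩ f ⁻¹' I) :=
    measureReal_mono (inter_subset_inter_left _ hSB)
  refine ⟨g, hg.mono (union_subset inter_subset_left inter_subset_left), ?_, ?_⟩
  · exact (hlow.symm.trans_le (hcut _)).trans hμlow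
  · exact (hhigh.symm.trans_le (hcut _)).trans hμhigh

theorem exists_steerable_split {W B O O' : Set (Euc d)} (hμ : μ ≪ volume) (hW : IsOpen W)
    (hWc : IsPreconnected W) (hB : IsOpen B) (hBc : Convex ℝ B) (hBW : B ⊆ W) (hO : IsOpen O)
    (hO' : IsOpen O') {q q' : Euc d} (hq : q ∈ B ∩ O) (hq' : q' ∈ B ∩ O') (hne : q ≠ q') {m : ℝ}
    (hm₀ : 0 ≤ m) (hm : m ≤ μ.real W) (hη : 0 < η) :
    ∃ g, Steerable W g ∧ m ≤ μ.real (g ⁻¹' O) + η ∧ μ.real W - m ≤ μ.real (g ⁻¹' O') + η := by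
  obtain ⟨f, hf⟩ := geometric_hahn_banach_point_point hne
  obtain ⟨a, ha, hab'⟩ := exists_between hf
  obtain ⟨b, hab, hb⟩ := exists_between hab'
  set S := B ∩ f ⁻¹' Ioo a b
  have hS : IsOpen S := hB.inter (isOpen_Ioo.preimage f.continuous)
  have hSne : S.Nonempty := by
    obtain ⟨c, hc⟩ := exists_between hab
    obtain ⟨x, hxB, rfl⟩ := hBc.isPreconnected.intermediate_value hq.1 hq'.1
      f.continuous.continuousOn ⟨(ha.trans hc.1).le, (hc.2.trans hb).le⟩
    exact ⟨x, hxB, hc⟩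
  obtain ⟨g₀, hg₀, hμg₀⟩ := exists_steerable_measureReal_le_of_isPreconnected hW hWc hS
    (inter_subset_left.trans hBW) hSne (half_pos hη) μ
  rw [← map_measureReal_apply hg₀.measurable hS.measurableSet] at hμg₀
  obtain ⟨g₁, hg₁, hμO, hμO'⟩ := exists_steerable_split_of_mapsTo_Icc (S := S)
    (hg₀.map_absolutelyContinuous hμ) hB hBc inter_subset_left hab.le
    (fun x hx => Ioo_subset_Icc_self hx.2) hO hO' hq hq' ha hb
    (le_min hm₀ measureReal_nonneg) (min_le_right m ((μ.map g₀).real S)) (half_pos hη)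
  rw [map_measureReal_apply hg₀.measurable (hg₁.measurable hO.measurableSet)] at hμO
  rw [map_measureReal_apply hg₀.measurable (hg₁.measurable hO'.measurableSet)] at hμO'
  refine ⟨g₁ ∘ g₀, (hg₁.mono hBW).comp hg₀, ?_, ?_⟩
  · rw [preimage_comp]
    rcases min_cases m ((μ.map g₀).real S) with h | h <;> linarith
  · rw [preimage_comp]
    linarith [min_le_left m ((μ.map g₀).real S)]

end Split

/-! ### Partial transport plans -/

section PartialPlan

variable {X : Type*} [PseudoEMetricSpace X] [MeasurableSpace X] {α α' β β' : Measure X}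
  {δ δ' m m' : ℝ≥0∞} {S : Set X}

/-- A part of `α` of mass at least `m` can be transported onto a part of `β` by a plan which moves
almost every point by at most `δ`. -/
def HasPartialPlan (δ m : ℝ≥0∞) (α β : Measure X) : Prop :=
  ∃ π : Measure (X × X), π.map Prod.fst ≤ α ∧ π.map Prod.snd ≤ β ∧
    (∀ᵐ p ∂π, edist p.1 p.2 ≤ δ) ∧ m ≤ π univ

theorem HasPartialPlan.mono (h : HasPartialPlan δ m α β) (hδ : δ ≤ δ') (hm : m' ≤ m)
    (hα : α ≤ α') (hβ : β ≤ β') : HasPartialPlan δ' m' α' β' := by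
  obtain ⟨π, hfst, hsnd, hdist, hmass⟩ := h
  exact ⟨π, hfst.trans hα, hsnd.trans hβ, hdist.mono fun _ hp => hp.trans hδ, hm.trans hmass⟩

theorem HasPartialPlan.add (h : HasPartialPlan δ m α β) (h' : HasPartialPlan δ m' α' β') :
    HasPartialPlan δ (m + m') (α + α') (β + β') := by
  obtain ⟨π, hfst, hsnd, hdist, hmass⟩ := h
  obtain ⟨π', hfst', hsnd', hdist', hmass'⟩ := h'
  refine ⟨π + π', ?_, ?_, ae_add_measure_iff.2 ⟨hdist, hdist'⟩, add_le_add hmass hmass'⟩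
  · rw [Measure.map_add _ _ measurable_fst]
    exact add_le_add hfst hfst'
  · rw [Measure.map_add _ _ measurable_snd]
    exact add_le_add hsnd hsnd'

theorem inv_max_mul_mul_eq_min {a b : ℝ≥0∞} (ha : a ≠ ∞) (hb : b ≠ ∞) :
    (max a b)⁻¹ * (a * b) = min a b := by
  by_cases h : max a b = 0
  · obtain ⟨rfl, rfl⟩ : a = 0 ∧ b = 0 := by simpa using h
    simp
  · rw [← max_mul_min a b, ← mul_assoc, ENNReal.inv_mul_cancel h (max_lt ha.lt_top hb.lt_top).ne,
      one_mul]

theorem inv_smul_smul_measure_le_self {Y : Type*} [MeasurableSpace Y] (μ : Measure Y)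
    {a c : ℝ≥0∞} (hac : a ≤ c) : c⁻¹ • a • μ ≤ μ := fun s => by
  rw [smul_smul, Measure.smul_apply, smul_eq_mul]
  exact mul_le_of_le_one_left' (((by gcongr : c⁻¹ * a ≤ c⁻¹ * c)).trans (ENNReal.inv_mul_le_one c))

theorem hasPartialPlan_of_ae_mem [IsFiniteMeasure α] [IsFiniteMeasure β] (hα : ∀ᵐ x ∂α, x ∈ S)
    (hβ : ∀ᵐ x ∂β, x ∈ S) :
    HasPartialPlan (Metric.ediam S) (min (α univ) (β univ)) α β := by
  refine ⟨(max (α univ) (β univ))⁻¹ • α.prod β, ?_, ?_, Measure.ae_smul_measure ?_ _, ?_⟩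
  · rw [Measure.map_smul, Measure.map_fst_prod]
    exact inv_smul_smul_measure_le_self α (le_max_right _ _)
  · rw [Measure.map_smul, Measure.map_snd_prod]
    exact inv_smul_smul_measure_le_self β (le_max_left _ _)
  · filter_upwards [Measure.quasiMeasurePreserving_fst.ae hα,
      Measure.quasiMeasurePreserving_snd.ae hβ] with p hp₁ hp₂
    exact Metric.edist_le_ediam_of_mem hp₁ hp₂
  · rw [Measure.smul_apply, ← univ_prod_univ, Measure.prod_prod, smul_eq_mul,
      inv_max_mul_mul_eq_min (measure_ne_top _ _) (measure_ne_top _ _)]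

theorem hasPartialPlan_restrict [IsFiniteMeasure α] [IsFiniteMeasure β] (hS : MeasurableSet S)
    (hSδ : Metric.ediam S ≤ δ) :
    HasPartialPlan δ (ENNReal.ofReal (min (α.real S) (β.real S))) (α.restrict S)
      (β.restrict S) := by
  refine (hasPartialPlan_of_ae_mem (ae_restrict_mem hS) (ae_restrict_mem hS)).mono hSδ ?_ le_rfl
    le_rfl
  simp [ENNReal.ofReal_min, ofReal_measureReal]

end PartialPlan

section Wasserstein

variable {d : ℕ} {α β : Measure (Euc d)} [IsProbabilityMeasure α] [IsProbabilityMeasure β]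

theorem W1_le_lintegral_of_map_le {π : Measure (Euc d × Euc d)} (hfst : π.map Prod.fst ≤ α)
    (hsnd : π.map Prod.snd ≤ β) (hπ : 1 ≤ π univ) : W1 α β ≤ ∫⁻ p, edist p.1 p.2 ∂π := by
  have := isFiniteMeasure_of_le α hfst
  have := isFiniteMeasure_of_le β hsnd
  have hα : π.map Prod.fst = α := Measure.eq_of_le_of_measure_univ_eq hfst <|
    le_antisymm (hfst univ) (by simpa [Measure.map_apply measurable_fst] using hπ)
  have hβ : π.map Prod.snd = β := Measure.eq_of_le_of_measure_univ_eq hsnd <|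
    le_antisymm (hsnd univ) (by simpa [Measure.map_apply measurable_snd] using hπ)
  exact iInf_le_of_le π (iInf_le_of_le hα (iInf_le _ hβ))

theorem HasPartialPlan.W1_le {δ m : ℝ≥0∞} {S : Set (Euc d)} (h : HasPartialPlan δ m α β)
    (hα : ∀ᵐ x ∂α, x ∈ S) (hβ : ∀ᵐ x ∂β, x ∈ S) : W1 α β ≤ δ + Metric.ediam S * (1 - m) := by
  obtain ⟨π, hfst, hsnd, hdist, hmass⟩ := h
  set α₁ := π.map Prod.fst with hα₁
  set β₁ := π.map Prod.snd with hβ₁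
  have hα₁univ : α₁ univ = π univ := by simp [hα₁, Measure.map_apply measurable_fst]
  have hβ₁univ : β₁ univ = π univ := by simp [hβ₁, Measure.map_apply measurable_snd]
  have hπ : π univ ≤ 1 := by simpa [hα₁univ] using hfst univ
  have := isFiniteMeasure_of_le α hfst
  have := isFiniteMeasure_of_le β hsnd
  have hαres : (α - α₁) univ = 1 - π univ := by
    rw [Measure.sub_apply .univ hfst, hα₁univ, measure_univ (μ := α)]
  have hβres : (β - β₁) univ = 1 - π univ := by
    rw [Measure.sub_apply .univ hsnd, hβ₁univ, measure_univ (μ := β)]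
  obtain ⟨π', hfst', hsnd', hdist', hmass'⟩ := hasPartialPlan_of_ae_mem
    (ae_mono (Measure.sub_le (ν := α₁)) hα) (ae_mono (Measure.sub_le (ν := β₁)) hβ)
  rw [hαres, hβres, min_self] at hmass'
  have hπ' : π' univ ≤ 1 - m := calc
    π' univ = π'.map Prod.fst univ := by simp [Measure.map_apply measurable_fst]
    _ ≤ 1 - π univ := hαres ▸ hfst' univ
    _ ≤ 1 - m := tsub_le_tsub_left hmass 1
  calc W1 α β ≤ ∫⁻ p, edist p.1 p.2 ∂(π + π') := by
        refine W1_le_lintegral_of_map_le ?_ ?_ ?_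
        · rw [Measure.map_add _ _ measurable_fst, add_comm]
          exact (add_le_add_left hfst' α₁).trans_eq (Measure.sub_add_cancel_of_le hfst)
        · rw [Measure.map_add _ _ measurable_snd, add_comm]
          exact (add_le_add_left hsnd' β₁).trans_eq (Measure.sub_add_cancel_of_le hsnd)
        · exact (add_tsub_cancel_of_le hπ).symm.trans_le (add_le_add le_rfl hmass')
    _ ≤ δ * π univ + Metric.ediam S * π' univ := by
        rw [lintegral_add_measure, ← lintegral_const, ← lintegral_const]
        exact add_le_add (lintegral_mono_ae hdist) (lintegral_mono_ae hdist')
    _ ≤ δ + Metric.ediam S * (1 - m) := by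
        gcongr
        exact mul_le_of_le_one_right' hπ

end Wasserstein

/-! ### Delivery along a chain of cells -/

section Delivery

theorem measureReal_union_le_add_sdiff_closure {X : Type*} [TopologicalSpace X] [MeasurableSpace X]
    {ν : Measure X} [IsFiniteMeasure ν] {U : Set X} (hU : ν (frontier U) = 0) (A : Set X) :
    ν.real (U ∪ A) ≤ ν.real U + ν.real (A \ closure U) := by
  have hsub : U ∪ A ⊆ U ∪ A \ closure U ∪ frontier U := by
    rintro x (hx | hx)
    · exact .inl (.inl hx)
    by_cases hxU : x ∈ closure U
    · exact (em (x ∈ U)).imp .inl fun h => ⟨hxU, fun hi => h (interior_subset hi)⟩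
    · exact .inl (.inr ⟨hx, hxU⟩)
  calc ν.real (U ∪ A) ≤ ν.real (U ∪ A \ closure U ∪ frontier U) := measureReal_mono hsub
    _ ≤ ν.real (U ∪ A \ closure U) + ν.real (frontier U) := measureReal_union_le _ _
    _ = ν.real (U ∪ A \ closure U) := by simp [measureReal_def, hU]
    _ ≤ ν.real U + ν.real (A \ closure U) := measureReal_union_le _ _

theorem ChainUnion.measure_frontier_eq_zero {X : Type*} [TopologicalSpace X] [MeasurableSpace X]
    {𝒜 : Set (Set X)} {B U : Set X} (h : ChainUnion 𝒜 B U) {ν : Measure X}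
    (hB : ν (frontier B) = 0) (h𝒜 : ∀ A ∈ 𝒜, ν (frontier A) = 0) : ν (frontier U) = 0 :=
  h.of_forall (fun s t hs ht => measure_mono_null (frontier_union_subset s t)
    (measure_union_null (measure_mono_null inter_subset_left hs)
      (measure_mono_null inter_subset_right ht))) hB h𝒜

variable {d : ℕ} {μ : Measure (Euc d)} [IsFiniteMeasure μ] {A U : Set (Euc d)} {η : ℝ}

theorem exists_steerable_deliver_sdiff_closure (hμ : μ ≪ volume) (hU : IsOpen U)
    (hUc : IsPreconnected U) (hA : IsOpen A) (hAc : Convex ℝ A) (hUA : (U ∩ A).Nonempty) {m : ℝ}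
    (hm₀ : 0 ≤ m) (hm : m ≤ μ.real (U ∪ A)) (hη : 0 < η) (hm_empty : A \ closure U = ∅ → m = 0) :
    ∃ g, Steerable (U ∪ A) g ∧ m ≤ μ.real (g ⁻¹' (A \ closure U)) + η ∧
      μ.real (U ∪ A) - m ≤ μ.real (g ⁻¹' U) + η := by
  have hW : IsOpen (U ∪ A) := hU.union hA
  have hWc : IsPreconnected (U ∪ A) := hUc.union' hUA hAc.isPreconnected
  rcases (A \ closure U).eq_empty_or_nonempty with hempty | ⟨q, hq⟩
  · obtain ⟨g, hg, hμg⟩ := exists_steerable_measureReal_le_of_isPreconnected hW hWc hU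
      subset_union_left (hUA.mono inter_subset_left) hη μ
    refine ⟨g, hg, ?_, ?_⟩
    · rw [hm_empty hempty]
      positivity
    · rwa [hm_empty hempty, sub_zero]
  · obtain ⟨q', hq'U, hq'A⟩ := hUA
    exact exists_steerable_split hμ hW hWc hA hAc subset_union_right
      (hA.sdiff isClosed_closure) hU ⟨hq.1, hq⟩ ⟨hq'A, hq'U⟩
      (fun h => hq.2 (subset_closure (h ▸ hq'U))) hm₀ hm hη

theorem Steerable.map_restrict_eq_restrict {g : Euc d → Euc d} (hg : Steerable U g)
    {D : Set (Euc d)} (hD : MeasurableSet D) (hUD : Disjoint U D) (κ : Measure (Euc d)) :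
    (κ.restrict D).map g = κ.restrict D := by
  rw [Measure.map_congr (g := _root_.id), Measure.map_id]
  filter_upwards [ae_restrict_mem hD] with x hx
  exact hg.eqOn_compl (hUD.notMem_of_mem_right hx)

theorem HasPartialPlan.union_of_steerable {g : Euc d → Euc d} {δ m : ℝ≥0∞} {ν : Measure (Euc d)}
    [IsFiniteMeasure ν] (h : HasPartialPlan δ m ((μ.restrict U).map g) (ν.restrict U))
    (hg : Steerable U g) {D : Set (Euc d)} (hD : MeasurableSet D) (hUD : Disjoint U D)
    (hDδ : Metric.ediam D ≤ δ) :
    HasPartialPlan δ (m + ENNReal.ofReal (min (μ.real D) (ν.real D))) (μ.map g)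
      (ν.restrict (U ∪ D)) := by
  refine (h.add (hasPartialPlan_restrict hD hDδ)).mono le_rfl le_rfl ?_
    (Measure.restrict_union hUD hD).ge
  rw [← hg.map_restrict_eq_restrict hD hUD, ← Measure.map_add _ _ hg.measurable,
    ← Measure.restrict_union hUD hD]
  exact Measure.map_mono Measure.restrict_le_self hg.measurable

theorem min_sub_le_min_sub_add_min {M D U N κD κU : ℝ} (hU : 0 ≤ U) (hN : N ≤ U + D)
    (hκD : min D M ≤ κD + η / 3) (hκU : M - min D M ≤ κU + η / 3) (hη : 0 ≤ η) :
    min M N - η ≤ min κU U - η / 3 + min κD D := by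
  grind

theorem ChainUnion.exists_steerable_hasPartialPlan {𝒜 : Set (Set (Euc d))} {B : Set (Euc d)}
    (h : ChainUnion 𝒜 B U) (hB : B ∈ 𝒜) {δ : ℝ≥0∞} {ν : Measure (Euc d)} [IsFiniteMeasure ν]
    (h𝒜 : ∀ A ∈ 𝒜, IsOpen A ∧ Convex ℝ A) (hdiam : ∀ A ∈ 𝒜, Metric.ediam A ≤ δ)
    (hfrontier : ∀ A ∈ 𝒜, ν (frontier A) = 0) (hμ : μ ≪ volume) (hη : 0 < η) :
    ∃ g, Steerable U g ∧ HasPartialPlan δ (ENNReal.ofReal (min (μ.real U) (ν.real U) - η))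
      (μ.map g) (ν.restrict U) := by
  induction h generalizing μ η with
  | base =>
    refine ⟨id, .id _, ?_⟩
    rw [Measure.map_id]
    exact (hasPartialPlan_restrict (h𝒜 B hB).1.measurableSet (hdiam B hB)).mono le_rfl
      (ENNReal.ofReal_le_ofReal (sub_le_self _ hη.le)) Measure.restrict_le_self le_rfl
  | @adjoin U A hU hA hUA ih =>
    have hUo : IsOpen U := hU.isOpen (h𝒜 B hB).1 fun A hA => (h𝒜 A hA).1
    have hUc : IsPreconnected U :=
      hU.isPreconnected (h𝒜 B hB).2.isPreconnected fun A hA => (h𝒜 A hA).2.isPreconnected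
    have hνU : ν (frontier U) = 0 := hU.measure_frontier_eq_zero (hfrontier B hB) hfrontier
    set D := A \ closure U
    have hD : MeasurableSet D := ((h𝒜 A hA).1.sdiff isClosed_closure).measurableSet
    obtain ⟨g, hg, hμD, hμU⟩ := exists_steerable_deliver_sdiff_closure
      (m := min (ν.real D) (μ.real (U ∪ A))) hμ hUo hUc (h𝒜 A hA).1 (h𝒜 A hA).2 hUA (by positivity)
      (min_le_right _ _) (div_pos hη three_pos) fun h => by simp [D, h]
    rw [← map_measureReal_apply hg.measurable hD] at hμD
    rw [← map_measureReal_apply hg.measurable hUo.measurableSet] at hμU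
    obtain ⟨g', hg', hplan⟩ := ih (μ := (μ.map g).restrict U)
      (Measure.restrict_le_self.absolutelyContinuous.trans (hg.map_absolutelyContinuous hμ))
      (div_pos hη three_pos)
    rw [measureReal_restrict_apply_self] at hplan
    refine ⟨g' ∘ g, (hg'.mono subset_union_left).comp hg, ?_⟩
    rw [← Measure.map_map hg'.measurable hg.measurable]
    refine (hplan.union_of_steerable hg' hD (disjoint_sdiff_right.mono_left subset_closure)
      ((Metric.ediam_mono sdiff_subset).trans (hdiam A hA))).mono le_rfl ?_ le_rfl
      (Measure.restrict_mono (union_subset_union_right U sdiff_subset) le_rfl)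
    exact (ENNReal.ofReal_le_ofReal (min_sub_le_min_sub_add_min measureReal_nonneg
      (measureReal_union_le_add_sdiff_closure hνU A) hμD hμU hη.le)).trans ENNReal.ofReal_add_le

end Delivery

/-! ### Approximate controllability -/

section Cells

theorem exists_convex_cell {E : Type*} [NormedAddCommGroup E] [NormedSpace ℝ E]
    [MeasurableSpace E] [OpensMeasurableSpace E] {ω : Set E} (hω : IsOpen ω) {x : E} (hx : x ∈ ω)
    {δ : ℝ} (hδ : 0 < δ) (ν : Measure E) [SFinite ν] :
    ∃ A, x ∈ A ∧ IsOpen A ∧ Convex ℝ A ∧ closure A ⊆ ω ∧ Metric.ediam A ≤ ENNReal.ofReal δ ∧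
      ν (frontier A) = 0 := by
  obtain ⟨R, hR, hRω⟩ := Metric.isOpen_iff.1 hω x hx
  obtain ⟨r, hr, hν⟩ := exists_null_frontier_thickening ν {x} (lt_min hR (half_pos hδ))
  rw [Metric.thickening_singleton] at hν
  refine ⟨Metric.ball x r, Metric.mem_ball_self hr.1, Metric.isOpen_ball, convex_ball x r,
    Metric.closure_ball_subset_closedBall.trans
      ((Metric.closedBall_subset_ball (hr.2.trans_le (min_le_left _ _))).trans hRω), ?_, hν⟩
  calc Metric.ediam (Metric.ball x r) ≤ 2 * ENNReal.ofReal r := by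
        rw [← Metric.eball_ofReal]
        exact Metric.ediam_eball_le
    _ = ENNReal.ofReal (2 * r) := by rw [ENNReal.ofReal_mul zero_le_two, ENNReal.ofReal_ofNat]
    _ ≤ ENNReal.ofReal δ :=
        ENNReal.ofReal_le_ofReal (by linarith [hr.2.trans_le (min_le_right R (δ / 2))])

variable {d : ℕ} {ω : Set (Euc d)}

theorem exists_superset_forall_steerable_hasPartialPlan (hω : IsOpen ω) (hωc : IsConnected ω)
    {K : Set (Euc d)} (hK : IsCompact K) (hKω : K ⊆ ω) {μ ν : Measure (Euc d)} [IsFiniteMeasure μ]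
    [IsFiniteMeasure ν] (hμ : μ ≪ volume) {δ : ℝ} (hδ : 0 < δ) :
    ∃ U ⊇ K, Bornology.IsBounded U ∧ closure U ⊆ ω ∧ ∀ η > 0, ∃ g, Steerable U g ∧
      HasPartialPlan (ENNReal.ofReal δ) (ENNReal.ofReal (min (μ.real U) (ν.real U) - η))
        (μ.map g) ν := by
  set 𝒜 : Set (Set (Euc d)) := {A | IsOpen A ∧ Convex ℝ A ∧ closure A ⊆ ω ∧
    Metric.ediam A ≤ ENNReal.ofReal δ ∧ ν (frontier A) = 0}
  have hcell (x) (hx : x ∈ ω) : ∃ A ∈ 𝒜, x ∈ A := by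
    obtain ⟨A, hxA, hA⟩ := exists_convex_cell hω hx hδ ν
    exact ⟨A, hA, hxA⟩
  obtain ⟨x₀, hx₀⟩ := hωc.nonempty
  obtain ⟨B, hB, hx₀B⟩ := hcell x₀ hx₀
  obtain ⟨U, hU, hKU⟩ := exists_chainUnion_superset hωc.isPreconnected (fun A hA => hA.1) hcell
    hB.1 ⟨x₀, hx₀, hx₀B⟩ hK hKω
  have hbounded (A) (hA : A ∈ 𝒜) : Bornology.IsBounded A :=
    Metric.isBounded_iff_ediam_ne_top.2 (hA.2.2.2.1.trans_lt ENNReal.ofReal_lt_top).ne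
  refine ⟨U, hKU, hU.of_forall (fun _ _ => .union) (hbounded B hB) hbounded,
    hU.of_forall (p := fun s => closure s ⊆ ω) (fun s t hs ht => ?_) hB.2.2.1
      fun A hA => hA.2.2.1, fun η hη => ?_⟩
  · rw [closure_union]
    exact union_subset hs ht
  · obtain ⟨g, hg, hplan⟩ := hU.exists_steerable_hasPartialPlan hB
      (fun A hA => ⟨hA.1, hA.2.1⟩) (fun A hA => hA.2.2.2.1) (fun A hA => hA.2.2.2.2) hμ hη
    exact ⟨g, hg, hplan.mono le_rfl le_rfl le_rfl Measure.restrict_le_self⟩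

end Cells

section Controllability

variable {d : ℕ}

theorem msupport_eq_support (μ : Measure (Euc d)) : msupport μ = μ.support := by
  rw [Measure.support_eq_forall_isOpen]
  ext x
  exact forall_congr' fun U => forall_comm

theorem ae_mem_of_msupport_subset {μ : Measure (Euc d)} {S : Set (Euc d)} (h : msupport μ ⊆ S) :
    ∀ᵐ x ∂μ, x ∈ S :=
  Filter.mem_of_superset Measure.support_mem_ae (msupport_eq_support μ ▸ h)

theorem measureReal_eq_one_of_ae_mem {X : Type*} [MeasurableSpace X] {μ : Measure X}
    [IsProbabilityMeasure μ] {S : Set X} (h : ∀ᵐ x ∂μ, x ∈ S) : μ.real S = 1 :=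
  (measureReal_congr (Filter.eventuallyEq_univ.2 h)).trans probReal_univ

theorem IsFlow.ae_mem_map {u : Euc d → ℝ → Euc d} {Φ : ℝ → Euc d → Euc d} (hΦ : IsFlow u Φ)
    (hu : IsRegularField u) {S : Set (Euc d)} (hS : IsClosed S) (hsupp : ∀ x t, x ∉ S → u x t = 0)
    {μ : Measure (Euc d)} (hμ : ∀ᵐ x ∂μ, x ∈ S) {t : ℝ} (ht : 0 ≤ t) :
    ∀ᵐ y ∂(μ.map (Φ t)), y ∈ S := by
  by_cases hm : AEMeasurable (Φ t) μ
  · refine (ae_map_iff hm hS.measurableSet).2 (hμ.mono fun x hx => ?_)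
    exact (hΦ.isTrajectory hu ht x).mem_of_isClosed hS hsupp (by rwa [hΦ.apply_zero])
      (right_mem_Icc.2 ht)
  · simp [Measure.map_of_not_aemeasurable hm]

theorem exists_pos_mul_one_sub_ofReal_le {D : ℝ≥0∞} (hD : D ≠ ∞) {ε : ℝ} (hε : 0 < ε) :
    ∃ η > 0, D * (1 - ENNReal.ofReal (1 - η)) ≤ ENNReal.ofReal ε := by
  lift D to ℝ≥0 using hD
  refine ⟨ε / (D + 1), by positivity, ?_⟩
  have h : D * (ε / (D + 1)) ≤ ε := by
    rw [← mul_div_assoc, div_le_iff₀ (by positivity)]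
    nlinarith
  calc (D : ℝ≥0∞) * (1 - ENNReal.ofReal (1 - ε / (D + 1)))
      ≤ D * ENNReal.ofReal (ε / (D + 1)) := by
        gcongr
        rw [tsub_le_iff_left, ← ENNReal.ofReal_one]
        simpa using ENNReal.ofReal_add_le (p := 1 - ε / (D + 1)) (q := ε / (D + 1))
    _ = ENNReal.ofReal (D * (ε / (D + 1))) := by
        rw [ENNReal.ofReal_mul D.coe_nonneg, ENNReal.ofReal_coe_nnreal]
    _ ≤ ENNReal.ofReal ε := ENNReal.ofReal_le_ofReal h

theorem approx_controllability_inside_general {ω : Set (Euc d)} (hωo : IsOpen ω)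
    (hωc : IsConnected ω) {μ₀ μ₁ : Measure (Euc d)} [IsProbabilityMeasure μ₀]
    [IsProbabilityMeasure μ₁] (h₀K : IsCompact (msupport μ₀)) (h₁K : IsCompact (msupport μ₁))
    (h₀ac : μ₀ ≪ volume) (h₀ω : msupport μ₀ ⊆ ω) (h₁ω : msupport μ₁ ⊆ ω) {T : ℝ} (hT : 0 < T)
    {ε : ℝ} (hε : 0 < ε) :
    ∃ u : Euc d → ℝ → Euc d, IsRegularField u ∧ (∀ x t, x ∉ ω → u x t = 0) ∧
      ∀ Φ : ℝ → Euc d → Euc d, IsFlow u Φ → W1 (μ₀.map (Φ T)) μ₁ ≤ ENNReal.ofReal ε ∧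
        ∀ t ∈ Icc (0 : ℝ) T, msupport (μ₀.map (Φ t)) ⊆ ω := by
  obtain ⟨U, hKU, hUb, hUω, hsteer⟩ := exists_superset_forall_steerable_hasPartialPlan hωo hωc
    (h₀K.union h₁K) (union_subset h₀ω h₁ω) (ν := μ₁) h₀ac (half_pos hε)
  have hμ₀U : ∀ᵐ x ∂μ₀, x ∈ U := ae_mem_of_msupport_subset (subset_union_left.trans hKU)
  have hμ₁U : ∀ᵐ x ∂μ₁, x ∈ U := ae_mem_of_msupport_subset (subset_union_right.trans hKU)
  obtain ⟨η, hη, hηε⟩ := exists_pos_mul_one_sub_ofReal_le hUb.ediam_ne_top (half_pos hε)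
  obtain ⟨g, hg, hplan⟩ := hsteer η hη
  rw [measureReal_eq_one_of_ae_mem hμ₀U, measureReal_eq_one_of_ae_mem hμ₁U, min_self] at hplan
  obtain ⟨u, hu, hsupp, hend⟩ := hg.exists_field T hT
  have hsupp' (x t) (hx : x ∉ closure U) : u x t = 0 := hsupp x t (notMem_subset subset_closure hx)
  refine ⟨u, hu, fun x t hx => hsupp' x t (notMem_subset hUω hx), fun Φ hΦ => ?_⟩
  have hmem {t : ℝ} (ht : 0 ≤ t) : ∀ᵐ y ∂(μ₀.map (Φ t)), y ∈ closure U :=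
    hΦ.ae_mem_map hu isClosed_closure hsupp' (hμ₀U.mono fun _ hx => subset_closure hx) ht
  refine ⟨?_, fun t ht => ?_⟩
  · have hΦT : Φ T = g := funext fun x => by
      simpa only [hΦ.apply_zero] using hend _ (hΦ.isTrajectory hu hT.le x)
    have := Measure.isProbabilityMeasure_map (μ := μ₀) hg.measurable.aemeasurable
    have hW1 := hplan.W1_le (hΦT ▸ hmem hT.le) (hμ₁U.mono fun _ hx => subset_closure hx)
    rw [Metric.ediam_closure] at hW1
    rw [hΦT, ← add_halves ε, ENNReal.ofReal_add (half_pos hε).le (half_pos hε).le]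
    exact hW1.trans (add_le_add le_rfl hηε)
  · rw [msupport_eq_support]
    exact (Measure.support_subset_of_isClosed isClosed_closure (hmem ht.1)).trans hUω

end Controllability

/-- Approximate controllability inside the control region: if both measures are
supported in `ω`, one can approximately steer one to the other in any time `T`,
keeping the support of the solution inside `ω`. -/
theorem approx_controllability_inside
    (d : ℕ) (ω : Set (Euc d)) (hω : ω.Nonempty) (hωo : IsOpen ω) (hωc : IsConnected ω)
    (μ0 μ1 : Measure (Euc d)) [IsProbabilityMeasure μ0] [IsProbabilityMeasure μ1]
    (h0K : IsCompact (msupport μ0)) (h1K : IsCompact (msupport μ1))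
    (h0ac : μ0 ≪ volume) (h1ac : μ1 ≪ volume)
    (h0ω : msupport μ0 ⊆ ω) (h1ω : msupport μ1 ⊆ ω) :
    ∀ T : ℝ, 0 < T → ∀ ε : ℝ, 0 < ε →
      ∃ u : Euc d → ℝ → Euc d,
        IsRegularField u ∧
        (∀ x t, x ∉ ω → u x t = 0) ∧
        ∀ Φ : ℝ → Euc d → Euc d, IsFlow u Φ →
          W1 (μ0.map (Φ T)) μ1 ≤ ENNReal.ofReal ε ∧
          ∀ t ∈ Icc (0:ℝ) T, msupport (μ0.map (Φ t)) ⊆ ω := by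
  exact fun _ hT _ hε =>
    approx_controllability_inside_general hωo hωc h0K h1K h0ac h0ω h1ω hT hε
end
end

section
/- Define u : ℝ → ℝ by u(x) = √x for x ≥ 0 and u(x) = 0 for x < 0, and for t ≥ 0 define Φ_t : ℝ → ℝ by Φ_t(x) = x for x < 0 and Φ_t(x) = (t/2 + √x)² for x ≥ 0. Then: (a) for each x ∈ ℝ, t ↦ Φ_t(x) is the solution of ẋ(t) = u(x(t)), x(0) = x; and (b) for each t ≥ 0, the pushforward Φ_t # (𝟙_{(−1,1)}(x) dx) of the restriction of the Lebesgue measure to (−1,1) equals the absolutely continuous measure with density 𝟙_{(−1,0)}(x) + (1 − t/(2√x))·𝟙_{(t²/4, (t/2+1)²)}(x) with respect to the Lebesgue measure. -/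
open MeasureTheory Set
open scoped ENNReal

noncomputable section

/-- The square-root vector field on `ℝ`. -/
def sqrtField (x : ℝ) : ℝ := if 0 ≤ x then Real.sqrt x else 0

/-- The associated flow map at time `t`. -/
def sqrtFlow (t x : ℝ) : ℝ := if x < 0 then x else (t / 2 + Real.sqrt x) ^ 2

/-!
The maps `sqrtFlow t` satisfy a flow law as long as `t / 2 + √x` stays nonnegative, so on the
half-line `(t² / 4, ∞)` swept out by the positive points `sqrtFlow t` is inverted by
`sqrtFlow (-t)`. The derivative of this inverse at `y` is `1 - t / (2 √y)`, which is the density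
of the transported measure to the right of `t² / 4`; the negative points do not move.
-/

section Pushforward

variable {α E : Type*} [MeasurableSpace α]

lemma map_restrict_image_eq_withDensity_of_leftInvOn [NormedAddCommGroup E] [NormedSpace ℝ E]
    [FiniteDimensional ℝ E] [MeasurableSpace E] [BorelSpace E] (μ : Measure E)
    [μ.IsAddHaarMeasure] {f g : E → E} {g' : E → E →L[ℝ] E} {s : Set E}
    (hs : NullMeasurableSet s μ) (hf : Measurable f) (hfg : LeftInvOn f g s)
    (hg : ∀ y ∈ s, HasFDerivWithinAt g (g' y) s y) :
    (μ.restrict (g '' s)).map f =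
      (μ.restrict s).withDensity fun y => ENNReal.ofReal |(g' y).det| := by
  set ν := (μ.restrict s).withDensity fun y => ENNReal.ofReal |(g' y).det|
  have hν : ν ≪ μ.restrict s := withDensity_absolutelyContinuous _ _
  have hg_meas : AEMeasurable g ν :=
    (ContinuousOn.aemeasurable₀ (fun y hy => (hg y hy).continuousWithinAt) hs).mono_ac hν
  have hfg_ae : f ∘ g =ᵐ[ν] id :=
    hν.ae_le ((ae_restrict_mem₀ hs).mono fun _ hy => hfg hy)
  rw [← map_withDensity_abs_det_fderiv_eq_addHaar μ hs hg hfg.injOn,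
    AEMeasurable.map_map_of_aemeasurable hf.aemeasurable hg_meas, Measure.map_congr hfg_ae,
    Measure.map_id]

lemma map_restrict_eq_restrict_of_eqOn_id {μ : Measure α} {f : α → α} {s : Set α}
    (hs : MeasurableSet s) (hf : EqOn f id s) : (μ.restrict s).map f = μ.restrict s := by
  rw [Measure.map_congr ((ae_restrict_mem hs).mono hf), Measure.map_id]

lemma restrict_Ioo_eq_restrict_Ioo_add_restrict_Ioo [LinearOrder α] [TopologicalSpace α]
    [OrderClosedTopology α] [OpensMeasurableSpace α] {μ : Measure α} [NullSingletonClass μ]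
    {a b c : α} (hab : a < b) (hbc : b ≤ c) :
    μ.restrict (Ioo a c) = μ.restrict (Ioo a b) + μ.restrict (Ioo b c) := by
  have hdisj : Disjoint (Ioo a b) (Ico b c) :=
    disjoint_left.2 fun _ hx hx' => hx.2.not_ge hx'.1
  rw [← Ioo_union_Ico_eq_Ioo hab hbc, Measure.restrict_union hdisj measurableSet_Ico,
    Measure.restrict_congr_set Ioo_ae_eq_Ico.symm]

lemma withDensity_ofReal_indicator_add_indicator {μ : Measure α} {s t : Set α} {f g : α → ℝ}
    (hs : MeasurableSet s) (ht : MeasurableSet t) (hf : Measurable f)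
    (hf_nonneg : ∀ x ∈ s, 0 ≤ f x) (hg_nonneg : ∀ x ∈ t, 0 ≤ g x) :
    μ.withDensity (fun x => ENNReal.ofReal (s.indicator f x + t.indicator g x)) =
      (μ.restrict s).withDensity (fun x => ENNReal.ofReal (f x)) +
        (μ.restrict t).withDensity (fun x => ENNReal.ofReal (g x)) := by
  have hsplit : (fun x => ENNReal.ofReal (s.indicator f x + t.indicator g x)) =
      s.indicator (fun x => ENNReal.ofReal (f x)) +
        t.indicator (fun x => ENNReal.ofReal (g x)) := by
    ext x
    rw [ENNReal.ofReal_add (indicator_nonneg hf_nonneg x) (indicator_nonneg hg_nonneg x),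
      Pi.add_apply]
    exact congrArg₂ (· + ·) (congrFun (indicator_comp_of_zero ENNReal.ofReal_zero) x).symm
      (congrFun (indicator_comp_of_zero ENNReal.ofReal_zero) x).symm
  rw [hsplit, withDensity_add_left (hf.ennreal_ofReal.indicator hs), withDensity_indicator hs,
    withDensity_indicator ht]

end Pushforward

section Flow

variable {a b s t x y : ℝ}

lemma sqrtFlow_of_neg (hx : x < 0) : sqrtFlow t x = x := if_pos hx

lemma sqrtFlow_of_nonneg (hx : 0 ≤ x) : sqrtFlow t x = (t / 2 + √x) ^ 2 := if_neg hx.not_gt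

lemma sqrtFlow_nonneg (hx : 0 ≤ x) : 0 ≤ sqrtFlow t x := by
  rw [sqrtFlow_of_nonneg hx]
  positivity

lemma sqrtFlow_zero_left (x : ℝ) : sqrtFlow 0 x = x := by
  rcases lt_or_ge x 0 with hx | hx
  · exact sqrtFlow_of_neg hx
  · rw [sqrtFlow_of_nonneg hx, zero_div, zero_add, Real.sq_sqrt hx]

lemma sqrt_sqrtFlow (hx : 0 ≤ x) (h : 0 ≤ t / 2 + √x) : √(sqrtFlow t x) = t / 2 + √x := by
  rw [sqrtFlow_of_nonneg hx, Real.sqrt_sq h]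

lemma sqrtFlow_sqrtFlow (h : 0 ≤ t / 2 + √x) : sqrtFlow s (sqrtFlow t x) = sqrtFlow (s + t) x := by
  rcases lt_or_ge x 0 with hx | hx
  · simp only [sqrtFlow_of_neg hx]
  · rw [sqrtFlow_of_nonneg (sqrtFlow_nonneg hx), sqrt_sqrtFlow hx h, sqrtFlow_of_nonneg hx]
    ring

lemma hasDerivAt_sqrtFlow_time (ht : 0 ≤ t) (x : ℝ) :
    HasDerivAt (fun s => sqrtFlow s x) (sqrtField (sqrtFlow t x)) t := by
  rcases lt_or_ge x 0 with hx | hx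
  · simpa only [sqrtFlow_of_neg hx, sqrtField, hx.not_ge, if_false] using hasDerivAt_const t x
  · rw [sqrtField, if_pos (sqrtFlow_nonneg hx), sqrt_sqrtFlow hx (by positivity)]
    simp only [sqrtFlow_of_nonneg hx]
    refine ((((hasDerivAt_id t).div_const 2).add_const √x).pow 2).congr_deriv ?_
    simp only [id_eq]
    ring

lemma hasDerivAt_sqrtFlow_space (t : ℝ) (hx : 0 < x) :
    HasDerivAt (sqrtFlow t) (1 + t / (2 * √x)) x := by
  have hsq : HasDerivAt (fun z => (t / 2 + √z) ^ 2) (1 + t / (2 * √x)) x := by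
    have hsqrt_ne : √x ≠ 0 := (Real.sqrt_pos.2 hx).ne'
    refine (((Real.hasDerivAt_sqrt hx.ne').const_add (t / 2)).pow 2).congr_deriv ?_
    field_simp
    ring
  refine hsq.congr_of_eventuallyEq ?_
  filter_upwards [lt_mem_nhds hx] with z hz using sqrtFlow_of_nonneg hz.le

lemma measurable_sqrtFlow (t : ℝ) : Measurable (sqrtFlow t) :=
  Measurable.ite measurableSet_Iio measurable_id (by fun_prop)

lemma strictMono_sqrtFlow (ht : 0 ≤ t) : StrictMono (sqrtFlow t) := by
  intro x y hxy
  rcases lt_or_ge y 0 with hy | hy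
  · rwa [sqrtFlow_of_neg (hxy.trans hy), sqrtFlow_of_neg hy]
  rcases lt_or_ge x 0 with hx | hx
  · rw [sqrtFlow_of_neg hx]
    exact hx.trans_le (sqrtFlow_nonneg hy)
  · rw [sqrtFlow_of_nonneg hx, sqrtFlow_of_nonneg hy]
    gcongr

lemma half_le_sqrt_of_sqrtFlow_le (ht : 0 ≤ t) (hx : 0 ≤ x) (hy : sqrtFlow t x ≤ y) :
    t / 2 ≤ √y :=
  calc t / 2 ≤ t / 2 + √x := le_add_of_nonneg_right (Real.sqrt_nonneg x)
    _ = √(sqrtFlow t x) := (sqrt_sqrtFlow hx (by positivity)).symm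
    _ ≤ √y := Real.sqrt_le_sqrt hy

lemma sqrtFlow_sqrtFlow_neg (h : t / 2 ≤ √y) : sqrtFlow t (sqrtFlow (-t) y) = y := by
  rw [sqrtFlow_sqrtFlow (by linarith), add_neg_cancel, sqrtFlow_zero_left]

lemma sqrtFlow_neg_sqrtFlow (ht : 0 ≤ t) (x : ℝ) : sqrtFlow (-t) (sqrtFlow t x) = x := by
  rw [sqrtFlow_sqrtFlow (by positivity), neg_add_cancel, sqrtFlow_zero_left]

lemma image_sqrtFlow_neg_Ioo (ht : 0 ≤ t) (ha : 0 ≤ a) :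
    sqrtFlow (-t) '' Ioo (sqrtFlow t a) (sqrtFlow t b) = Ioo a b := by
  have hmono := strictMono_sqrtFlow ht
  apply Subset.antisymm
  · rintro _ ⟨y, hy, rfl⟩
    have hinv : sqrtFlow t (sqrtFlow (-t) y) = y :=
      sqrtFlow_sqrtFlow_neg (half_le_sqrt_of_sqrtFlow_le ht ha hy.1.le)
    rwa [← hinv, mem_Ioo, hmono.lt_iff_lt, hmono.lt_iff_lt] at hy
  · exact fun x hx => ⟨sqrtFlow t x, ⟨hmono hx.1, hmono hx.2⟩, sqrtFlow_neg_sqrtFlow ht x⟩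

lemma one_sub_div_two_mul_sqrt_nonneg (h : t / 2 ≤ √y) : 0 ≤ 1 - t / (2 * √y) :=
  sub_nonneg.2 (div_le_one_of_le₀ (by linarith) (by positivity))

lemma map_sqrtFlow_restrict_Ioo_of_nonneg (ht : 0 ≤ t) (ha : 0 ≤ a) (b : ℝ) :
    (volume.restrict (Ioo a b)).map (sqrtFlow t) =
      (volume.restrict (Ioo (sqrtFlow t a) (sqrtFlow t b))).withDensity
        fun y => ENNReal.ofReal (1 - t / (2 * √y)) := by
  have hhalf (y) (hy : y ∈ Ioo (sqrtFlow t a) (sqrtFlow t b)) : t / 2 ≤ √y :=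
    half_le_sqrt_of_sqrtFlow_le ht ha hy.1.le
  have hderiv (y) (hy : y ∈ Ioo (sqrtFlow t a) (sqrtFlow t b)) :
      HasDerivAt (sqrtFlow (-t)) (1 - t / (2 * √y)) y := by
    simpa only [neg_div, ← sub_eq_add_neg] using
      hasDerivAt_sqrtFlow_space (-t) ((sqrtFlow_nonneg ha).trans_lt hy.1)
  rw [← image_sqrtFlow_neg_Ioo ht ha, map_restrict_image_eq_withDensity_of_leftInvOn volume
    measurableSet_Ioo.nullMeasurableSet (measurable_sqrtFlow t)
    (fun y hy => sqrtFlow_sqrtFlow_neg (hhalf y hy))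
    fun y hy => (hderiv y hy).hasDerivWithinAt.hasFDerivWithinAt]
  refine withDensity_congr_ae ((ae_restrict_mem measurableSet_Ioo).mono fun y hy => ?_)
  simp only [ContinuousLinearMap.det_toSpanSingleton,
    abs_of_nonneg (one_sub_div_two_mul_sqrt_nonneg (hhalf y hy))]

lemma map_sqrtFlow_restrict_Ioo_of_neg_of_nonneg (ht : 0 ≤ t) (ha : a < 0) (hb : 0 ≤ b) :
    (volume.restrict (Ioo a b)).map (sqrtFlow t) =
      volume.withDensity fun x => ENNReal.ofReal
        ((Ioo a 0).indicator (fun _ => 1) x +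
          (Ioo (sqrtFlow t 0) (sqrtFlow t b)).indicator (fun y => 1 - t / (2 * √y)) x) := by
  have hneg : (volume.restrict (Ioo a 0)).map (sqrtFlow t) = volume.restrict (Ioo a 0) :=
    map_restrict_eq_restrict_of_eqOn_id measurableSet_Ioo fun _ hx => sqrtFlow_of_neg hx.2
  rw [restrict_Ioo_eq_restrict_Ioo_add_restrict_Ioo ha hb,
    Measure.map_add _ _ (measurable_sqrtFlow t), hneg,
    map_sqrtFlow_restrict_Ioo_of_nonneg ht le_rfl,
    withDensity_ofReal_indicator_add_indicator measurableSet_Ioo measurableSet_Ioo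
      measurable_const (fun _ _ => zero_le_one) fun y hy =>
        one_sub_div_two_mul_sqrt_nonneg (half_le_sqrt_of_sqrtFlow_le ht le_rfl hy.1.le)]
  simp only [ENNReal.ofReal_one, withDensity_const, one_smul]

end Flow

/-- The flow of the square-root vector field solves the ODE, and it transports
the Lebesgue measure restricted to `(-1,1)` (a measure with connected support)
onto an explicit absolutely continuous measure whose support has two connected
components. -/
theorem sqrt_field_example :
    (∀ x : ℝ, sqrtFlow 0 x = x) ∧
    (∀ x : ℝ, ∀ t : ℝ, 0 ≤ t →
      HasDerivWithinAt (fun s => sqrtFlow s x) (sqrtField (sqrtFlow t x)) (Ici (0:ℝ)) t) ∧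
    (∀ t : ℝ, 0 ≤ t →
      (volume.restrict (Ioo (-1:ℝ) 1)).map (sqrtFlow t)
        = volume.withDensity (fun x => ENNReal.ofReal
            ((Ioo (-1:ℝ) 0).indicator (fun _ => (1:ℝ)) x
              + (Ioo (t ^ 2 / 4) ((t / 2 + 1) ^ 2)).indicator
                  (fun y => 1 - t / (2 * Real.sqrt y)) x))) := by
  refine ⟨sqrtFlow_zero_left, fun x t ht => (hasDerivAt_sqrtFlow_time ht x).hasDerivWithinAt,
    fun t ht => ?_⟩
  have hzero : sqrtFlow t 0 = t ^ 2 / 4 := by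
    rw [sqrtFlow_of_nonneg le_rfl, Real.sqrt_zero]
    ring
  have hone : sqrtFlow t 1 = (t / 2 + 1) ^ 2 := by
    rw [sqrtFlow_of_nonneg zero_le_one, Real.sqrt_one]
  rw [map_sqrtFlow_restrict_Ioo_of_neg_of_nonneg ht neg_one_lt_zero zero_le_one, hzero, hone]
end
end
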